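/- arXiv:0807.4181 — 3 statements merged into one kernel-verified Lean document; each statement's English description precedes it below -/
import Mathlib

section
/- Ricci curvature of the canonical steady soliton metric (Section 5): for every compact set K ⊆ U × (a,b) there exist N₀ ∈ ℕ and C > 0 such that for every integer N ≥ N₀ one has N + R > 0 on a neighbourhood of K, and at every point of K and for all i, j ∈ {1, …, n}: |R̄_{ij} − R_{ij}| ≤ C/N, |R̄_{i0} + (1/2) ∂_{x^i} R| ≤ C/N, and |R̄₀₀ + R_τ/2| ≤ C/N. -/
/-!
The difference between `R̄ic` and its limit is computed exactly, as a polynomial in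
`u = ḡ⁰⁰ = 1 / (N + R)` without constant term whose coefficients do not involve `N`; since `R` is
bounded, `u ≤ 2 / N` for large `N`, and the coefficients are bounded on compact sets.

As the derivatives of `N + R` are those of `R`, each Christoffel symbol of `ḡ` is either free of `N`
or `u` times something free of `N`, and `D u = -u² D R` for every derivation `D`. Substituting in
the definition of `R̄ic` gives at order `u⁰`:
* spatial components: the terms of `Ric` itself (`Flow.bric_ss`);
* mixed components: `∇_k R^k_i - ∂_τ Γ^k_{ik} = ∇_k R^k_i - ∂_i R`, which is `-∂_i R / 2` by the
  contracted second Bianchi identity (`Geom.contracted_bianchi`, `Flow.bric_sz`);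
* time component: `-ΔR / 2 - ∂_τ R - |Ric|²`, which is `-∂_τ R / 2` by the evolution equation
  `∂_τ R = -ΔR - 2 |Ric|²` of the scalar curvature (`Flow.T_scal`, `Flow.bric_zz`).

All of this is tensor calculus that only uses Leibniz' rule and the commutation of partial
derivatives, so it is carried out in an arbitrary commutative `ℝ`-algebra `A` with commuting
derivations. It is applied to the algebra `Smooth.Sm Ω` of smooth functions on
`Ω = U × (a, b)`, where no differentiability side conditions arise; the relation `Smooth.Rep`
connects it with the functions on all of `ℝⁿ × ℝ` that the statement is about.
-/

noncomputable section

open scoped BigOperators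

namespace CanonicalSoliton

/-- Space-time `ℝⁿ × ℝ`, a point being `(x, τ)`. -/
abbrev E (n : ℕ) := (Fin n → ℝ) × ℝ

variable {n : ℕ}

/-- Spatial partial derivative `∂_{xⁱ}`. -/
def pdx (i : Fin n) (f : E n → ℝ) (p : E n) : ℝ :=
  fderiv ℝ f p (Pi.single i 1, 0)

/-- Time partial derivative `∂_τ`. -/
def pdt (f : E n → ℝ) (p : E n) : ℝ :=
  fderiv ℝ f p (0, 1)

/-- Coordinate directions on space-time; the index `0` is the time direction `∂/∂τ`,
and the index `i.succ` is the spatial direction `∂/∂xⁱ`. -/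
def dir (a : Fin (n + 1)) : E n :=
  Fin.cases ((0 : Fin n → ℝ), (1 : ℝ)) (fun i => (Pi.single i 1, (0 : ℝ))) a

/-- Partial derivative `∂_{x^a}` on space-time, `x⁰ = τ` being time. -/
def pd (a : Fin (n + 1)) (f : E n → ℝ) (p : E n) : ℝ :=
  fderiv ℝ f p (dir a)

variable (g : E n → Matrix (Fin n) (Fin n) ℝ)

/-- Entries `g^{ij}` of the inverse metric. -/
def ginv (p : E n) : Matrix (Fin n) (Fin n) ℝ := (g p)⁻¹

/-- Christoffel symbols `Γ^i_{jk} = (1/2) g^{il} (∂_{x^j} g_{kl} + ∂_{x^k} g_{jl} − ∂_{x^l} g_{jk})`. -/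
def Chr (i j k : Fin n) (p : E n) : ℝ :=
  (1 / 2) * ∑ l, ginv g p i l *
    (pdx j (fun q => g q k l) p + pdx k (fun q => g q j l) p - pdx l (fun q => g q j k) p)

/-- Ricci tensor `R_{jk} = ∂_{x^i} Γ^i_{jk} − ∂_{x^k} Γ^i_{ji} + Γ^i_{jk} Γ^l_{il} − Γ^l_{ji} Γ^i_{lk}`. -/
def Ric (j k : Fin n) (p : E n) : ℝ :=
  (∑ i, pdx i (Chr g i j k) p) - pdx k (fun q => ∑ i, Chr g i j i q) p
    + (∑ i, ∑ l, Chr g i j k p * Chr g l i l p)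
    - ∑ i, ∑ l, Chr g l j i p * Chr g i l k p

/-- Ricci tensor with one index raised: `R^i_j := g^{ik} R_{kj}`. -/
def RicUp (i j : Fin n) (p : E n) : ℝ := ∑ k, ginv g p i k * Ric g k j p

/-- Scalar curvature `R := g^{jk} R_{jk}`. -/
def scal (p : E n) : ℝ := ∑ j, ∑ k, ginv g p j k * Ric g j k p

/-- `R_τ := ∂_τ R`. -/
def scalτ (p : E n) : ℝ := pdt (scal g) p

/-- Entries of the canonical shrinking-soliton metric `ĝ`:
`ĝ_{ij} = g_{ij}/τ`, `ĝ₀₀ = N/(2τ³) + R/τ − n/(2τ²)`, `ĝ_{0i} = 0`. -/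
def hatg (N : ℕ) (a b : Fin (n + 1)) (p : E n) : ℝ :=
  Fin.cases
    (Fin.cases ((N : ℝ) / (2 * p.2 ^ 3) + scal g p / p.2 - (n : ℝ) / (2 * p.2 ^ 2))
      (fun _ => 0) b)
    (fun i => Fin.cases (0 : ℝ) (fun j => g p i j / p.2) b) a

/-- Entries of the inverse of `ĝ`: `ĝ^{ij} = τ g^{ij}`, `ĝ^{00} = (ĝ₀₀)⁻¹`, `ĝ^{0i} = 0`. -/
def hatginv (N : ℕ) (a b : Fin (n + 1)) (p : E n) : ℝ :=
  Fin.cases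
    (Fin.cases (hatg g N 0 0 p)⁻¹ (fun _ => 0) b)
    (fun i => Fin.cases (0 : ℝ) (fun j => p.2 * ginv g p i j) b) a

/-- Christoffel symbols of `ĝ`:
`Γ̂^a_{bc} = (1/2) ĝ^{ad} (∂_{x^b} ĝ_{cd} + ∂_{x^c} ĝ_{bd} − ∂_{x^d} ĝ_{bc})`. -/
def hatChr (N : ℕ) (a b c : Fin (n + 1)) (p : E n) : ℝ :=
  (1 / 2) * ∑ d, hatginv g N a d p *
    (pd b (hatg g N c d) p + pd c (hatg g N b d) p - pd d (hatg g N b c) p)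

/-- Ricci tensor of `ĝ`:
`R̂_{ab} = ∂_{x^c} Γ̂^c_{ab} − ∂_{x^b} Γ̂^c_{ac} + Γ̂^c_{ab} Γ̂^d_{cd} − Γ̂^d_{ac} Γ̂^c_{bd}`. -/
def hatRic (N : ℕ) (a b : Fin (n + 1)) (p : E n) : ℝ :=
  (∑ c, pd c (hatChr g N c a b) p) - pd b (fun q => ∑ c, hatChr g N c a c q) p
    + (∑ c, ∑ d, hatChr g N c a b p * hatChr g N d c d p)
    - ∑ c, ∑ d, hatChr g N d a c p * hatChr g N c b d p

/-- Hessian with respect to `ĝ`: `∇̂²_{ab} f = ∂_{x^a} ∂_{x^b} f − (∂_{x^c} f) Γ̂^c_{ab}`. -/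
def hatHess (N : ℕ) (f : E n → ℝ) (a b : Fin (n + 1)) (p : E n) : ℝ :=
  pd a (fun q => pd b f q) p - ∑ c, pd c f p * hatChr g N c a b p

/-- Entries of the canonical steady-soliton metric `ḡ`:
`ḡ_{ij} = g_{ij}`, `ḡ₀₀ = N + R`, `ḡ_{0i} = 0`. -/
def barg (N : ℕ) (a b : Fin (n + 1)) (p : E n) : ℝ :=
  Fin.cases
    (Fin.cases ((N : ℝ) + scal g p) (fun _ => 0) b)
    (fun i => Fin.cases (0 : ℝ) (fun j => g p i j) b) a

/-- Entries of the inverse of `ḡ`: `ḡ^{ij} = g^{ij}`, `ḡ^{00} = (N + R)⁻¹`, `ḡ^{0i} = 0`. -/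
def barginv (N : ℕ) (a b : Fin (n + 1)) (p : E n) : ℝ :=
  Fin.cases
    (Fin.cases ((N : ℝ) + scal g p)⁻¹ (fun _ => 0) b)
    (fun i => Fin.cases (0 : ℝ) (fun j => ginv g p i j) b) a

/-- Christoffel symbols of `ḡ`:
`Γ̄^a_{bc} = (1/2) ḡ^{ad} (∂_{x^b} ḡ_{cd} + ∂_{x^c} ḡ_{bd} − ∂_{x^d} ḡ_{bc})`. -/
def barChr (N : ℕ) (a b c : Fin (n + 1)) (p : E n) : ℝ :=
  (1 / 2) * ∑ d, barginv g N a d p *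
    (pd b (barg g N c d) p + pd c (barg g N b d) p - pd d (barg g N b c) p)

/-- Ricci tensor of `ḡ`:
`R̄_{ab} = ∂_{x^c} Γ̄^c_{ab} − ∂_{x^b} Γ̄^c_{ac} + Γ̄^c_{ab} Γ̄^d_{cd} − Γ̄^d_{ac} Γ̄^c_{bd}`. -/
def barRic (N : ℕ) (a b : Fin (n + 1)) (p : E n) : ℝ :=
  (∑ c, pd c (barChr g N c a b) p) - pd b (fun q => ∑ c, barChr g N c a c q) p
    + (∑ c, ∑ d, barChr g N c a b p * barChr g N d c d p)
    - ∑ c, ∑ d, barChr g N d a c p * barChr g N c b d p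

/-- Hessian with respect to `ḡ`: `∇̄²_{ab} f = ∂_{x^a} ∂_{x^b} f − (∂_{x^c} f) Γ̄^c_{ab}`. -/
def barHess (N : ℕ) (f : E n → ℝ) (a b : Fin (n + 1)) (p : E n) : ℝ :=
  pd a (fun q => pd b f q) p - ∑ c, pd c f p * barChr g N c a b p

end CanonicalSoliton


namespace CanonicalSoliton

/-! ### Algebraic Riemannian geometry -/

namespace Alg

/-- A metric in an algebraic setting: `A` plays the role of the functions, `d i` of the partial
derivatives, `g` of the metric in coordinates, and `h` of its inverse. -/
structure Geom (n : ℕ) (A : Type*) [CommRing A] [Algebra ℝ A] where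
  d : Fin n → Derivation ℝ A A
  d_comm : ∀ i j x, d i (d j x) = d j (d i x)
  g : Matrix (Fin n) (Fin n) A
  h : Matrix (Fin n) (Fin n) A
  g_symm : ∀ i j, g i j = g j i
  g_mul_h : g * h = 1

variable {n : ℕ} {A : Type*} [CommRing A] [Algebra ℝ A]

variable (A) in
/-- The scalar `1 / 2` as an element of the algebra. -/
def half : A := algebraMap ℝ A (1 / 2)

lemma two_half : 2 * half A = 1 := by
  have : (2 : A) = algebraMap ℝ A 2 := (map_ofNat (algebraMap ℝ A) 2).symm
  rw [half, this, ← map_mul]; norm_num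

lemma der_half (D : Derivation ℝ A A) : D (half A) = 0 := D.map_algebraMap _

lemma cancel_two {x y : A} (hxy : 2 * x = 2 * y) : x = y := by
  linear_combination half A * hxy - (x - y) * two_half (A := A)

lemma der_mul (D : Derivation ℝ A A) (x y : A) : D (x * y) = D x * y + x * D y := by
  rw [D.leibniz, smul_eq_mul, smul_eq_mul]; ring

lemma map_der_mul (D : Derivation ℝ A A) (M N : Matrix (Fin n) (Fin n) A) :
    (M * N).map D = M.map D * N + M * N.map D := by
  ext i j
  simp only [Matrix.map_apply, Matrix.add_apply, Matrix.mul_apply, map_sum, der_mul,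
    Finset.sum_add_distrib]

lemma map_der_add (D : Derivation ℝ A A) (M N : Matrix (Fin n) (Fin n) A) :
    (M + N).map D = M.map D + N.map D := by
  ext i j; simp

lemma map_der_sub (D : Derivation ℝ A A) (M N : Matrix (Fin n) (Fin n) A) :
    (M - N).map D = M.map D - N.map D := by
  ext i j; simp

namespace Geom
variable (S : Geom n A)

lemma h_mul_g : S.h * S.g = 1 := mul_eq_one_comm.mp S.g_mul_h

lemma g_transpose : S.g.transpose = S.g := by ext i j; exact S.g_symm j i

lemma h_transpose : S.h.transpose = S.h := by
  have h1 : S.h.transpose * S.g = 1 := by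
    rw [← S.g_transpose, ← Matrix.transpose_mul, S.g_mul_h, Matrix.transpose_one]
  calc S.h.transpose = S.h.transpose * (S.g * S.h) := by rw [S.g_mul_h, mul_one]
    _ = S.h := by rw [← mul_assoc, h1, one_mul]

lemma h_symm (i j : Fin n) : S.h i j = S.h j i := by
  conv_lhs => rw [← S.h_transpose]
  rfl

/-- The Christoffel symbol `Γ^i_{jk}`. -/
def chr (i j k : Fin n) : A :=
  half A * ∑ l, S.h i l * (S.d j (S.g k l) + S.d k (S.g j l) - S.d l (S.g j k))

lemma chr_symm (i j k : Fin n) : S.chr i j k = S.chr i k j := by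
  unfold chr
  congr 1
  refine Finset.sum_congr rfl fun l _ => ?_
  rw [S.g_symm j k]; ring

/-- The Ricci tensor, by the same formula as `CanonicalSoliton.Ric`. Its symmetry in `j, k` is
proved only along the Ricci flow (`Flow.ric_symm`). -/
def ric (j k : Fin n) : A :=
  (∑ i, S.d i (S.chr i j k)) - S.d k (∑ i, S.chr i j i)
    + (∑ i, ∑ l, S.chr i j k * S.chr l i l)
    - ∑ i, ∑ l, S.chr l j i * S.chr i l k

/-- The Ricci tensor `R^i_j` with its first index raised. -/
def ricUp (i j : Fin n) : A := ∑ k, S.h i k * S.ric k j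

/-- The scalar curvature. -/
def scal : A := ∑ j, ∑ k, S.h j k * S.ric j k

/-- The connection matrix in direction `k`, with `(i, j)` entry `Γ^i_{jk}`. -/
def conn (k : Fin n) : Matrix (Fin n) (Fin n) A := Matrix.of fun i j => S.chr i j k

lemma conn_apply (k i j : Fin n) : S.conn k i j = S.chr i j k := rfl

lemma g_mul_conn (l j k : Fin n) : (S.g * S.conn k) l j =
    half A * (S.d j (S.g k l) + S.d k (S.g j l) - S.d l (S.g j k)) := by
  set v : Fin n → A := fun l => S.d j (S.g k l) + S.d k (S.g j l) - S.d l (S.g j k) with hv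
  have h1 : (S.g.mulVec (S.h.mulVec v)) l = v l := by
    rw [Matrix.mulVec_mulVec, S.g_mul_h, Matrix.one_mulVec]
  change _ = half A * v l
  rw [← h1]
  simp only [Matrix.mul_apply, conn_apply, chr, Matrix.mulVec, dotProduct]
  rw [Finset.mul_sum]
  exact Finset.sum_congr rfl fun m _ => by ring

/-- The Levi-Civita connection is metric: `∇_k g = 0`. -/
lemma map_d_g (k : Fin n) :
    S.g.map (S.d k) = S.g * S.conn k + (S.conn k).transpose * S.g := by
  have h1 : (S.conn k).transpose * S.g = (S.g * S.conn k).transpose := by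
    rw [Matrix.transpose_mul, g_transpose]
  rw [h1]
  ext i j
  rw [Matrix.add_apply, Matrix.transpose_apply, g_mul_conn, g_mul_conn, Matrix.map_apply,
    S.g_symm j i, S.g_symm i k, S.g_symm j k]
  linear_combination -(S.d k (S.g i j)) * two_half (A := A)

lemma map_der_h (D : Derivation ℝ A A) : S.h.map D = -(S.h * S.g.map D * S.h) := by
  have h1 : S.g.map D * S.h + S.g * S.h.map D = 0 := by
    rw [← map_der_mul, S.g_mul_h]
    ext i j
    rw [Matrix.map_apply, Matrix.one_apply]
    split_ifs <;> simp
  calc S.h.map D = S.h * S.g * S.h.map D := by rw [S.h_mul_g, one_mul]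
    _ = S.h * (S.g.map D * S.h + S.g * S.h.map D) - S.h * S.g.map D * S.h := by noncomm_ring
    _ = _ := by rw [h1]; noncomm_ring

/-- The inverse metric is parallel: `∇_k h = 0`. -/
lemma map_d_h (k : Fin n) :
    S.h.map (S.d k) = -(S.conn k * S.h) - S.h * (S.conn k).transpose := by
  rw [map_der_h, map_d_g]
  have e : -(S.h * (S.g * S.conn k + (S.conn k).transpose * S.g) * S.h)
    = -((S.h * S.g) * S.conn k * S.h) - S.h * (S.conn k).transpose * (S.g * S.h) := by
    noncomm_ring
  rw [e, S.h_mul_g, S.g_mul_h, one_mul, mul_one]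

/-- The curvature of the connection, as an endomorphism for each pair of directions: the `(i, j)`
entry is `R^i_{jkl} = ∂_k Γ^i_{jl} - ∂_l Γ^i_{jk} + [Γ_k, Γ_l]^i_j`. -/
def curv (k l : Fin n) : Matrix (Fin n) (Fin n) A :=
  (S.conn l).map (S.d k) - (S.conn k).map (S.d l) + S.conn k * S.conn l - S.conn l * S.conn k

lemma curv_anti (k l : Fin n) : S.curv k l = -S.curv l k := by
  unfold curv; abel

lemma map_d_comm (k l : Fin n) (M : Matrix (Fin n) (Fin n) A) :
    (M.map (S.d k)).map (S.d l) = (M.map (S.d l)).map (S.d k) := by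
  ext i j; exact S.d_comm _ _ _

/-- Curvature endomorphisms are skew for the metric: apply `d k` and `d l` to `g` in both orders. -/
lemma g_mul_curv_anti (l k : Fin n) :
    S.g * S.curv l k + (S.curv l k).transpose * S.g = 0 := by
  have h0 := S.map_d_comm k l S.g
  have key : ∀ k l, (S.g.map (S.d k)).map (S.d l) =
      (S.g * S.conn l + (S.conn l).transpose * S.g) * S.conn k + S.g * (S.conn k).map (S.d l)
      + (S.conn k).transpose * (S.g * S.conn l + (S.conn l).transpose * S.g)
      + ((S.conn k).map (S.d l)).transpose * S.g := by
    intro k l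
    rw [map_d_g, map_der_add, map_der_mul, map_der_mul, map_d_g, Matrix.transpose_map]
    noncomm_ring
  rw [key k l, key l k] at h0
  rw [← sub_eq_zero] at h0
  rw [← h0]
  unfold curv
  simp only [Matrix.transpose_add, Matrix.transpose_sub, Matrix.transpose_mul]
  noncomm_ring

/-- The second Bianchi identity. The covariant derivatives act on the endomorphism indices only;
the terms coming from the two-form indices cancel in the cyclic sum, as the connection is
torsion-free. -/
lemma bianchi (m k l : Fin n) :
    ((S.curv k l).map (S.d m) + S.conn m * S.curv k l - S.curv k l * S.conn m)
    + ((S.curv l m).map (S.d k) + S.conn k * S.curv l m - S.curv l m * S.conn k)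
    + ((S.curv m k).map (S.d l) + S.conn l * S.curv m k - S.curv m k * S.conn l) = 0 := by
  simp only [curv, map_der_sub, map_der_add, map_der_mul]
  rw [S.map_d_comm k m, S.map_d_comm l m, S.map_d_comm l k]
  noncomm_ring

/-- The curvature with its second index raised, `R^{ij}_{kl}`, as the `(i, j)` entry. -/
def curvUp (k l : Fin n) : Matrix (Fin n) (Fin n) A := S.curv k l * S.h

lemma curvUp_anti (k l i j : Fin n) : S.curvUp k l i j = -S.curvUp l k i j := by
  rw [curvUp, curv_anti, neg_mul]; rfl

lemma curvUp_anti' (k l i j : Fin n) : S.curvUp k l i j = -S.curvUp k l j i := by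
  have h1 : S.curvUp k l + (S.curvUp k l).transpose = 0 := by
    have e : S.curvUp k l + (S.curvUp k l).transpose
        = S.h * (S.g * S.curv k l + (S.curv k l).transpose * S.g) * S.h := by
      have e2 : S.h * (S.g * S.curv k l + (S.curv k l).transpose * S.g) * S.h
        = (S.h * S.g) * S.curv k l * S.h + S.h * (S.curv k l).transpose * (S.g * S.h) := by
        noncomm_ring
      rw [e2, S.h_mul_g, S.g_mul_h, curvUp, Matrix.transpose_mul, S.h_transpose]
      noncomm_ring
    rw [e, g_mul_curv_anti]; simp
  have := congrFun (congrFun h1 i) j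
  simp only [Matrix.add_apply, Matrix.transpose_apply, Matrix.zero_apply] at this
  linear_combination this

/-- Covariant differentiation commutes with raising an index: on the left the covariant derivative
of an endomorphism, on the right that of a tensor with two upper indices. -/
lemma cov_mul_h (m : Fin n) (M : Matrix (Fin n) (Fin n) A) :
    (M.map (S.d m) + S.conn m * M - M * S.conn m) * S.h =
      (M * S.h).map (S.d m) + S.conn m * (M * S.h) + (M * S.h) * (S.conn m).transpose := by
  rw [map_der_mul, map_d_h]; noncomm_ring

/-- The second Bianchi identity for the curvature with two upper indices. -/
lemma bianchi_up (m k l i j : Fin n) :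
    (S.d m (S.curvUp k l i j) + ∑ a, S.chr i a m * S.curvUp k l a j
        + ∑ a, S.curvUp k l i a * S.chr j a m)
    + (S.d k (S.curvUp l m i j) + ∑ a, S.chr i a k * S.curvUp l m a j
        + ∑ a, S.curvUp l m i a * S.chr j a k)
    + (S.d l (S.curvUp m k i j) + ∑ a, S.chr i a l * S.curvUp m k a j
        + ∑ a, S.curvUp m k i a * S.chr j a l) = 0 := by
  have h1 := congrArg (· * S.h) (S.bianchi m k l)
  simp only [add_mul, cov_mul_h, zero_mul] at h1
  have h2 := congrFun (congrFun h1 i) j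
  simpa [Matrix.mul_apply, Matrix.add_apply, conn_apply, curvUp] using h2

/-- The Ricci tensor is the trace of the curvature. -/
lemma ric_eq (m k : Fin n) : S.ric m k = ∑ i, S.curv i k i m := by
  simp only [curv, Matrix.sub_apply, Matrix.add_apply, Matrix.map_apply, Finset.sum_add_distrib,
    Finset.sum_sub_distrib, conn_apply, Matrix.mul_apply, ric, map_sum]
  congr 1
  · congr 1
    rw [Finset.sum_comm]
    refine Finset.sum_congr rfl fun i _ => Finset.sum_congr rfl fun j _ => ?_
    rw [S.chr_symm i j]; ring
  · refine Finset.sum_congr rfl fun i _ => Finset.sum_congr rfl fun j _ => ?_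
    rw [S.chr_symm i j]; ring

lemma sum_curvUp (i k : Fin n) : ∑ j, S.curvUp j k j i = S.ricUp i k := by
  simp only [curvUp, Matrix.mul_apply, ricUp, ric_eq, Finset.mul_sum]
  rw [Finset.sum_comm]
  refine Finset.sum_congr rfl fun i _ => Finset.sum_congr rfl fun j _ => ?_
  rw [S.h_symm]; ring

lemma sum_curvUp' (i k : Fin n) : ∑ j, S.curvUp k j i j = S.ricUp i k := by
  rw [← sum_curvUp]
  refine Finset.sum_congr rfl fun j _ => ?_
  rw [S.curvUp_anti k j, S.curvUp_anti' j k]; ring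

lemma sum_curvUp_neg (i k : Fin n) : ∑ j, S.curvUp j k i j = -S.ricUp i k := by
  rw [← sum_curvUp, ← Finset.sum_neg_distrib]
  exact Finset.sum_congr rfl fun j _ => S.curvUp_anti' j k _ _

lemma sum_curvUp_neg' (i k : Fin n) : ∑ j, S.curvUp k j j i = -S.ricUp i k := by
  rw [← sum_curvUp, ← Finset.sum_neg_distrib]
  exact Finset.sum_congr rfl fun j _ => S.curvUp_anti k j _ _

lemma sum_ricUp (hr : ∀ j k, S.ric j k = S.ric k j) : ∑ i, S.ricUp i i = S.scal := by
  simp only [ricUp, scal]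
  exact Finset.sum_congr rfl fun i _ => Finset.sum_congr rfl fun j _ => by rw [hr]

end Geom

lemma sum_anti (f : Fin n → Fin n → A) (hf : ∀ i j, f i j = -f j i) :
    ∑ i, ∑ j, f i j = 0 := by
  have h1 : ∑ i, ∑ j, f i j = -∑ i, ∑ j, f i j := by
    conv_lhs => rw [Finset.sum_comm]
    simp only [← Finset.sum_neg_distrib]
    exact Finset.sum_congr rfl fun i _ => Finset.sum_congr rfl fun j _ => hf _ _
  refine cancel_two ?_
  linear_combination h1

namespace Geom
variable (S : Geom n A)

/-- The contracted second Bianchi identity `2 ∇_i R^i_k = ∂_k R`, obtained by taking two traces in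
`bianchi_up`; the terms in which a Christoffel symbol meets the two-form indices vanish since the
curvature is skew and the Christoffel symbol symmetric. -/
lemma contracted_bianchi (hr : ∀ j k, S.ric j k = S.ric k j) (k : Fin n) :
    2 * (∑ i, S.d i (S.ricUp i k) + ∑ i, ∑ a, S.chr i a i * S.ricUp a k
      - ∑ i, ∑ a, S.chr i a k * S.ricUp a i) = S.d k S.scal := by
  have h0 : ∑ i, ∑ j, ((S.d i (S.curvUp k j i j) + ∑ a, S.chr i a i * S.curvUp k j a j
        + ∑ a, S.curvUp k j i a * S.chr j a i)
    + (S.d k (S.curvUp j i i j) + ∑ a, S.chr i a k * S.curvUp j i a j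
        + ∑ a, S.curvUp j i i a * S.chr j a k)
    + (S.d j (S.curvUp i k i j) + ∑ a, S.chr i a j * S.curvUp i k a j
        + ∑ a, S.curvUp i k i a * S.chr j a j)) = 0 :=
    Finset.sum_eq_zero fun i _ => Finset.sum_eq_zero fun j _ => S.bianchi_up i k j i j
  simp only [Finset.sum_add_distrib] at h0
  have a1 : ∑ i, ∑ j, S.d i (S.curvUp k j i j) = ∑ i, S.d i (S.ricUp i k) := by
    simp only [← map_sum, sum_curvUp']
  have b1 : ∑ i, ∑ j, ∑ a, S.chr i a i * S.curvUp k j a j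
      = ∑ i, ∑ a, S.chr i a i * S.ricUp a k := by
    refine Finset.sum_congr rfl fun i _ => ?_
    rw [Finset.sum_comm]
    simp only [← Finset.mul_sum, sum_curvUp']
  have c1 : ∑ i, ∑ j, ∑ a, S.curvUp k j i a * S.chr j a i = 0 := by
    rw [Finset.sum_comm]
    refine Finset.sum_eq_zero fun j _ => sum_anti _ fun i a => ?_
    rw [S.curvUp_anti' k j i a, S.chr_symm j a i]; ring
  have a2 : ∑ i, ∑ j, S.d k (S.curvUp j i i j) = -S.d k S.scal := by
    simp only [← map_sum, sum_curvUp_neg, Finset.sum_neg_distrib, S.sum_ricUp hr, map_neg]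
  have b2 : ∑ i, ∑ j, ∑ a, S.chr i a k * S.curvUp j i a j
      = -∑ i, ∑ a, S.chr i a k * S.ricUp a i := by
    rw [← Finset.sum_neg_distrib]
    refine Finset.sum_congr rfl fun i _ => ?_
    rw [Finset.sum_comm]
    simp only [← Finset.mul_sum, sum_curvUp_neg, mul_neg, Finset.sum_neg_distrib]
  have c2 : ∑ i, ∑ j, ∑ a, S.curvUp j i i a * S.chr j a k
      = -∑ i, ∑ a, S.chr i a k * S.ricUp a i := by
    rw [← Finset.sum_neg_distrib, Finset.sum_comm]
    refine Finset.sum_congr rfl fun i _ => ?_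
    rw [Finset.sum_comm]
    simp only [← Finset.sum_mul, sum_curvUp_neg', neg_mul, Finset.sum_neg_distrib]
    simp only [mul_comm]
  have a3 : ∑ i, ∑ j, S.d j (S.curvUp i k i j) = ∑ i, S.d i (S.ricUp i k) := by
    rw [Finset.sum_comm]
    simp only [← map_sum, sum_curvUp]
  have b3 : ∑ i, ∑ j, ∑ a, S.chr i a j * S.curvUp i k a j = 0 := by
    refine Finset.sum_eq_zero fun j _ => sum_anti _ fun i a => ?_
    rw [S.curvUp_anti' j k a i, S.chr_symm j a i]; ring
  have c3 : ∑ i, ∑ j, ∑ a, S.curvUp i k i a * S.chr j a j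
      = ∑ i, ∑ a, S.chr i a i * S.ricUp a k := by
    rw [Finset.sum_comm]
    refine Finset.sum_congr rfl fun i _ => ?_
    rw [Finset.sum_comm]
    simp only [← Finset.sum_mul, sum_curvUp]
    simp only [mul_comm]
  rw [a1, b1, c1, a2, b2, c2, a3, b3, c3] at h0
  linear_combination h0

end Geom

/-! ### Evolution along the reverse Ricci flow -/

/-- An algebraic solution of the reverse Ricci flow: `T` is the time derivative. -/
structure Flow (n : ℕ) (A : Type*) [CommRing A] [Algebra ℝ A] extends Geom n A where
  T : Derivation ℝ A A
  T_comm : ∀ i x, T (d i x) = d i (T x)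
  flow : ∀ j k, T (g j k) = 2 * toGeom.ric j k

namespace Flow
variable (S : Flow n A)

/-- Along the flow the Ricci tensor is the time derivative of `g / 2`, hence symmetric. -/
lemma ric_symm (j k : Fin n) : S.ric j k = S.ric k j := by
  refine cancel_two ?_
  rw [← S.flow, ← S.flow, S.g_symm]

/-- The gradient `R^{;i}` of the scalar curvature. -/
def grad (i : Fin n) : A := ∑ l, S.h i l * S.d l S.scal

/-- `∂_τ Γ^i_{mi} = ∂_m R`: the trace `Γ^i_{mi}` is half of `h^{il} ∂_m g_{il}`, whose time
derivative may be exchanged with the spatial one. -/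
lemma T_trace_chr (m : Fin n) : S.T (∑ i, S.chr i m i) = S.d m S.scal := by
  have e1 : ∑ i, S.chr i m i = half A * ∑ i, ∑ l, S.h i l * S.d m (S.g i l) := by
    have hz : ∑ i, ∑ l, S.h i l * (S.d i (S.g m l) - S.d l (S.g m i)) = 0 := by
      refine sum_anti _ fun i l => ?_
      rw [S.h_symm]; ring
    simp only [Geom.chr, ← Finset.mul_sum]
    congr 1
    rw [← sub_eq_zero, ← hz]
    simp only [← Finset.sum_sub_distrib]
    exact Finset.sum_congr rfl fun i _ => Finset.sum_congr rfl fun j _ => by ring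
  have e2 : S.scal = half A * ∑ i, ∑ l, S.h i l * S.T (S.g i l) := by
    simp only [Geom.scal, S.flow, Finset.mul_sum]
    refine Finset.sum_congr rfl fun i _ => Finset.sum_congr rfl fun j _ => ?_
    linear_combination -(S.h i j * S.ric i j) * two_half (A := A)
  have tr : ∀ D D' : Derivation ℝ A A, ∑ i, ∑ l, D (S.h i l) * D' (S.g i l)
      = -Matrix.trace (S.h * S.g.map D * S.h * S.g.map D') := by
    intro D D'
    rw [← Matrix.trace_neg, ← neg_mul, ← S.map_der_h]
    simp only [Matrix.trace, Matrix.diag_apply, Matrix.mul_apply, Matrix.map_apply]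
    exact Finset.sum_congr rfl fun i _ => Finset.sum_congr rfl fun j _ => by rw [S.g_symm i j]
  have e3 : ∑ i, ∑ l, S.T (S.h i l) * S.d m (S.g i l)
      = ∑ i, ∑ l, S.d m (S.h i l) * S.T (S.g i l) := by
    rw [tr, tr, mul_assoc, Matrix.trace_mul_comm, ← mul_assoc]
  rw [e1, e2]
  simp only [der_mul, der_half, map_sum, Finset.sum_add_distrib, e3, S.T_comm, zero_mul]

/-- The time derivative `∂_τ Γ^i_{jk}` of the connection, with the index `j` raised. -/
def dchr (k : Fin n) : Matrix (Fin n) (Fin n) A := (S.conn k).map S.T * S.h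

lemma sum_dchr (k : Fin n) : ∑ i, S.dchr i i k = S.grad k := by
  simp only [dchr, Matrix.mul_apply, grad, Matrix.map_apply, Geom.conn_apply]
  rw [Finset.sum_comm]
  refine Finset.sum_congr rfl fun m _ => ?_
  rw [← Finset.sum_mul, ← map_sum, T_trace_chr, S.h_symm k m, mul_comm]

/-- `h^{jk} ∂_τ Γ^i_{jk} = 0`: as `∂_τ Γ` is `∇_j R_{kl} + ∇_k R_{jl} - ∇_l R_{jk}` with `l`
raised, this trace is the contracted Bianchi identity. -/
lemma sum_dchr' (i : Fin n) : ∑ k, S.dchr k i k = 0 := by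
  have key : ∀ l, ∑ i, S.g l i * ∑ k, S.dchr k i k = 0 := by
    intro l
    have e0 : ∑ i, S.g l i * ∑ k, S.dchr k i k
        = ∑ k, ∑ j, (S.d j (S.ric k l) + S.d k (S.ric j l) - S.d l (S.ric j k)
          - 2 * ∑ a, S.ric l a * S.chr a j k) * S.h j k := by
      have f1 : ∀ k, S.g * (S.conn k).map S.T
          = (S.g * S.conn k).map S.T - S.g.map S.T * S.conn k := by
        intro k; rw [map_der_mul]; noncomm_ring
      have f2 : ∀ k j, (S.g * (S.conn k).map S.T) l j =
          S.d j (S.ric k l) + S.d k (S.ric j l) - S.d l (S.ric j k)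
          - 2 * ∑ a, S.ric l a * S.chr a j k := by
        intro k j
        have two_half' := two_half (A := A)
        have hT : ∀ i x y, S.T (S.d i (S.g x y)) = 2 * S.d i (S.ric x y) := by
          intro i x y
          rw [S.T_comm, S.flow, two_mul, map_add, two_mul]
        rw [f1, Matrix.sub_apply, Matrix.map_apply, S.g_mul_conn, der_mul, der_half, zero_mul,
          zero_add, map_sub, map_add, hT, hT, hT, Matrix.mul_apply]
        simp only [Matrix.map_apply, S.flow, Geom.conn_apply, mul_assoc, ← Finset.mul_sum]
        linear_combination (S.d j (S.ric k l) + S.d k (S.ric j l) - S.d l (S.ric j k)) * two_half'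
      simp only [← f2]
      simp only [Finset.mul_sum]
      rw [Finset.sum_comm]
      refine Finset.sum_congr rfl fun k _ => ?_
      have := congrFun (congrFun (mul_assoc S.g ((S.conn k).map S.T) S.h) l) k
      rw [Matrix.mul_apply, Matrix.mul_apply] at this
      exact this.symm
    have hb := S.contracted_bianchi S.ric_symm l
    have dh : ∀ l j k, S.d l (S.h j k)
        = -(∑ a, S.chr j a l * S.h a k) - ∑ a, S.h j a * S.chr k a l := by
      intro l j k
      simpa [Matrix.mul_apply, Geom.conn_apply] using congrFun (congrFun (S.map_d_h l) j) k
    set E3 := ∑ k, ∑ j, ∑ a, S.ric l a * S.chr a j k * S.h j k with hE3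
    have e1 : ∑ k, ∑ j, S.d j (S.ric k l) * S.h j k
        = ∑ i, S.d i (S.ricUp i l) + ∑ i, ∑ a, S.chr i a i * S.ricUp a l + E3 := by
      have p1 : ∑ i, S.d i (S.ricUp i l) = ∑ k, ∑ j, S.d j (S.ric k l) * S.h j k
          + ∑ j, ∑ k, S.d j (S.h j k) * S.ric k l := by
        simp only [Geom.ricUp, map_sum, der_mul, Finset.sum_add_distrib]
        rw [add_comm]
        congr 1
        rw [Finset.sum_comm]
        simp only [mul_comm]
      have p2 : ∑ j, ∑ k, S.d j (S.h j k) * S.ric k l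
          = -(∑ i, ∑ a, S.chr i a i * S.ricUp a l) - E3 := by
        simp only [dh, sub_mul, neg_mul, Finset.sum_sub_distrib, Finset.sum_neg_distrib]
        congr 1
        · congr 1
          refine Finset.sum_congr rfl fun i _ => ?_
          simp only [Geom.ricUp, Finset.mul_sum, Finset.sum_mul]
          rw [Finset.sum_comm]
          simp only [mul_assoc]
        · rw [hE3]
          refine Finset.sum_congr rfl fun i _ => ?_
          simp only [Finset.sum_mul]
          rw [Finset.sum_comm]
          refine Finset.sum_congr rfl fun a _ => Finset.sum_congr rfl fun b _ => ?_
          rw [S.ric_symm l b, S.h_symm a i]; ring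
      linear_combination -p1 - p2
    have e1' : ∑ k, ∑ j, S.d k (S.ric j l) * S.h j k
        = ∑ k, ∑ j, S.d j (S.ric k l) * S.h j k := by
      rw [Finset.sum_comm]
      refine Finset.sum_congr rfl fun a _ => Finset.sum_congr rfl fun b _ => ?_
      rw [S.h_symm]
    have e2 : ∑ k, ∑ j, S.d l (S.ric j k) * S.h j k
        = S.d l S.scal + 2 * ∑ i, ∑ a, S.chr i a l * S.ricUp a i := by
      have p1 : S.d l S.scal = ∑ k, ∑ j, S.d l (S.ric j k) * S.h j k
          + ∑ j, ∑ k, S.d l (S.h j k) * S.ric j k := by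
        simp only [Geom.scal, map_sum, der_mul, Finset.sum_add_distrib]
        rw [add_comm]
        congr 1
        rw [Finset.sum_comm]
        simp only [mul_comm]
      have p2 : ∑ j, ∑ k, S.d l (S.h j k) * S.ric j k
          = -(∑ i, ∑ a, S.chr i a l * S.ricUp a i)
            - (∑ i, ∑ a, S.chr i a l * S.ricUp a i) := by
        simp only [dh, sub_mul, neg_mul, Finset.sum_sub_distrib, Finset.sum_neg_distrib]
        congr 1
        · congr 1
          refine Finset.sum_congr rfl fun i _ => ?_
          simp only [Geom.ricUp, Finset.mul_sum, Finset.sum_mul]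
          rw [Finset.sum_comm]
          refine Finset.sum_congr rfl fun a _ => Finset.sum_congr rfl fun b _ => ?_
          rw [S.ric_symm]; ring
        · rw [Finset.sum_comm]
          refine Finset.sum_congr rfl fun i _ => ?_
          simp only [Geom.ricUp, Finset.mul_sum, Finset.sum_mul]
          rw [Finset.sum_comm]
          refine Finset.sum_congr rfl fun a _ => Finset.sum_congr rfl fun b _ => ?_
          rw [S.h_symm]; ring
      linear_combination -p1 - p2
    have e3 : ∑ k, ∑ j, (2 * ∑ a, S.ric l a * S.chr a j k) * S.h j k = 2 * E3 := by
      simp only [hE3, Finset.mul_sum, Finset.sum_mul, mul_assoc]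
    rw [e0]
    simp only [sub_mul, add_mul, Finset.sum_add_distrib, Finset.sum_sub_distrib]
    rw [e1', e1, e2, e3]
    linear_combination hb
  have h1 : S.h.mulVec (S.g.mulVec fun i => ∑ k, S.dchr k i k) = 0 := by
    have : (S.g.mulVec fun i => ∑ k, S.dchr k i k) = 0 := funext key
    rw [this, Matrix.mulVec_zero]
  rw [Matrix.mulVec_mulVec, S.h_mul_g, Matrix.one_mulVec] at h1
  exact congrFun h1 i

/-- The evolution equation `∂_τ R = -2 |Ric|² - ΔR` of the scalar curvature. It comes from the
variation `∂_τ R^i_{jkl} = ∇_k (∂_τ Γ)^i_{jl} - ∇_l (∂_τ Γ)^i_{jk}` and the two traces `sum_dchr`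
and `sum_dchr'` of `∂_τ Γ`. -/
lemma T_scal : S.T S.scal = -2 * (∑ i, ∑ k, S.ricUp i k * S.ricUp k i)
    - ((∑ k, S.d k (S.grad k)) + ∑ k, ∑ a, S.chr k a k * S.grad a) := by
  have e0 : S.scal = ∑ k, ∑ i, S.curvUp i k i k := by
    rw [← S.sum_ricUp S.ric_symm]
    exact Finset.sum_congr rfl fun k _ => (S.sum_curvUp k k).symm
  have f1 : ∀ i k, (S.curvUp i k).map S.T =
      ((S.dchr k).map (S.d i) + S.conn i * S.dchr k + S.dchr k * (S.conn i).transpose)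
      - ((S.dchr i).map (S.d k) + S.conn k * S.dchr i + S.dchr i * (S.conn k).transpose)
      + S.curv i k * S.h.map S.T := by
    intro i k
    have hc : ∀ (i : Fin n) (M : Matrix (Fin n) (Fin n) A),
        (M.map (S.d i)).map S.T = (M.map S.T).map (S.d i) := by
      intro i M; ext a b; exact S.T_comm _ _
    rw [Geom.curvUp, map_der_mul]
    congr 1
    simp only [dchr, ← S.cov_mul_h]
    rw [← sub_mul]
    congr 1
    rw [Geom.curv, map_der_sub, map_der_add, map_der_sub, map_der_mul, map_der_mul, hc, hc]
    noncomm_ring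
  have f2 : ∀ i k, S.T (S.curvUp i k i k) =
      (S.d i (S.dchr k i k) + ∑ a, S.chr i a i * S.dchr k a k + ∑ a, S.dchr k i a * S.chr k a i)
      - (S.d k (S.dchr i i k) + ∑ a, S.chr i a k * S.dchr i a k
        + ∑ a, S.dchr i i a * S.chr k a k)
      + ∑ a, S.curv i k i a * S.T (S.h a k) := by
    intro i k
    simpa [Matrix.mul_apply, Geom.conn_apply] using congrFun (congrFun (f1 i k) i) k
  rw [e0]
  simp only [map_sum, f2, Finset.sum_add_distrib, Finset.sum_sub_distrib]
  have a1 : ∑ k, ∑ i, S.d i (S.dchr k i k) = 0 := by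
    rw [Finset.sum_comm]; simp [← map_sum, sum_dchr']
  have a2 : ∑ k, ∑ i, ∑ a, S.chr i a i * S.dchr k a k = 0 := by
    rw [Finset.sum_comm]
    refine Finset.sum_eq_zero fun i _ => ?_
    rw [Finset.sum_comm]; simp [← Finset.mul_sum, sum_dchr']
  have a3 : ∑ k, ∑ i, ∑ a, S.dchr k i a * S.chr k a i
      = ∑ k, ∑ i, ∑ a, S.chr i a k * S.dchr i a k := by
    conv_rhs => rw [Finset.sum_comm]
    refine Finset.sum_congr rfl fun k _ => ?_
    rw [Finset.sum_comm]
    refine Finset.sum_congr rfl fun a _ => Finset.sum_congr rfl fun b _ => ?_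
    rw [S.chr_symm k a b]; ring
  have b1 : ∑ k, ∑ i, S.d k (S.dchr i i k) = ∑ k, S.d k (S.grad k) := by
    simp only [← map_sum, sum_dchr]
  have b2 : ∑ k, ∑ i, ∑ a, S.dchr i i a * S.chr k a k = ∑ k, ∑ a, S.chr k a k * S.grad a := by
    refine Finset.sum_congr rfl fun k _ => ?_
    rw [Finset.sum_comm]; simp only [← Finset.sum_mul, sum_dchr]; simp only [mul_comm]
  have c1 : ∑ k, ∑ i, ∑ a, S.curv i k i a * S.T (S.h a k)
      = -2 * ∑ i, ∑ k, S.ricUp i k * S.ricUp k i := by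
    have hT : ∀ a k, S.T (S.h a k) = -2 * ∑ b, S.ricUp a b * S.h b k := by
      intro a k
      have := congrFun (congrFun (S.map_der_h S.T) a) k
      rw [Matrix.map_apply, Matrix.neg_apply, Matrix.mul_apply] at this
      rw [this, neg_mul, Finset.mul_sum]
      congr 1
      refine Finset.sum_congr rfl fun b _ => ?_
      rw [Matrix.mul_apply, Geom.ricUp, Finset.sum_mul, Finset.sum_mul, Finset.mul_sum]
      refine Finset.sum_congr rfl fun c _ => ?_
      rw [Matrix.map_apply, S.flow]; ring
    have s1 : ∀ k, ∑ i, ∑ a, S.curv i k i a * S.T (S.h a k)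
        = ∑ a, S.ric a k * S.T (S.h a k) := by
      intro k
      rw [Finset.sum_comm]
      simp only [← Finset.sum_mul, ← S.ric_eq]
    simp only [s1]
    simp only [hT]
    rw [Finset.sum_comm, Finset.mul_sum]
    refine Finset.sum_congr rfl fun a _ => ?_
    simp only [Finset.mul_sum]
    rw [Finset.sum_comm]
    refine Finset.sum_congr rfl fun b _ => ?_
    rw [show S.ricUp b a = ∑ k, S.h b k * S.ric k a from rfl, Finset.mul_sum, Finset.mul_sum]
    refine Finset.sum_congr rfl fun k _ => ?_
    rw [S.ric_symm a k]; ring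
  rw [a1, a2, a3, b1, b2, c1]
  ring

/-! ### The space-time metric -/

/-- The partial derivatives on space-time, with index `0` for time. -/
def bd (a : Fin (n + 1)) : Derivation ℝ A A := Fin.cases S.T S.d a

/-- The space-time metric with time component `φ`, to be taken as `N + R`. -/
def bg (φ : A) (a b : Fin (n + 1)) : A :=
  Fin.cases (Fin.cases φ (fun _ => 0) b) (fun i => Fin.cases (0 : A) (fun j => S.g i j) b) a

/-- The inverse space-time metric, where `u` is the inverse of `φ`. -/
def bh (u : A) (a b : Fin (n + 1)) : A :=
  Fin.cases (Fin.cases u (fun _ => 0) b) (fun i => Fin.cases (0 : A) (fun j => S.h i j) b) a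

/-- The Christoffel symbols of the space-time metric. In the names of the lemmas about them, `s`
stands for a spatial index and `z` for the index `0`. -/
def bchr (φ u : A) (a b c : Fin (n + 1)) : A :=
  half A * ∑ d, S.bh u a d * (S.bd b (S.bg φ c d) + S.bd c (S.bg φ b d) - S.bd d (S.bg φ b c))

/-- The Ricci tensor of the space-time metric. -/
def bric (φ u : A) (a b : Fin (n + 1)) : A :=
  (∑ c, S.bd c (S.bchr φ u c a b)) - S.bd b (∑ c, S.bchr φ u c a c)
    + (∑ c, ∑ d, S.bchr φ u c a b * S.bchr φ u d c d)
    - ∑ c, ∑ d, S.bchr φ u d a c * S.bchr φ u c b d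

section
variable (φ u : A)

@[simp] lemma bd_zero : S.bd 0 = S.T := rfl
@[simp] lemma bd_succ (i : Fin n) : S.bd i.succ = S.d i := rfl
@[simp] lemma bg_zero_zero : S.bg φ 0 0 = φ := rfl
@[simp] lemma bg_zero_succ (i : Fin n) : S.bg φ 0 i.succ = 0 := rfl
@[simp] lemma bg_succ_zero (i : Fin n) : S.bg φ i.succ 0 = 0 := rfl
@[simp] lemma bg_succ_succ (i j : Fin n) : S.bg φ i.succ j.succ = S.g i j := rfl
@[simp] lemma bh_zero_zero : S.bh u 0 0 = u := rfl
@[simp] lemma bh_zero_succ (i : Fin n) : S.bh u 0 i.succ = 0 := rfl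
@[simp] lemma bh_succ_zero (i : Fin n) : S.bh u i.succ 0 = 0 := rfl
@[simp] lemma bh_succ_succ (i j : Fin n) : S.bh u i.succ j.succ = S.h i j := rfl

lemma bchr_sss (i j k : Fin n) : S.bchr φ u i.succ j.succ k.succ = S.chr i j k := by
  simp [bchr, Fin.sum_univ_succ, Geom.chr]

lemma bchr_zss (j k : Fin n) : S.bchr φ u 0 j.succ k.succ = -(u * S.ric j k) := by
  simp only [bchr, Fin.sum_univ_succ, bh_zero_zero, bh_zero_succ, bd_zero, bd_succ, bg_succ_zero,
    bg_succ_succ, map_zero, zero_mul, Finset.sum_const_zero, S.flow]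
  linear_combination -(u * S.ric j k) * two_half (A := A)

lemma bchr_ssz (i j : Fin n) : S.bchr φ u i.succ j.succ 0 = S.ricUp i j := by
  simp only [bchr, Fin.sum_univ_succ, bh_succ_zero, bh_succ_succ, bd_zero, bd_succ, bg_zero_succ,
    bg_succ_zero, bg_succ_succ, map_zero, zero_mul, S.flow, Geom.ricUp, zero_add, sub_zero,
    Finset.mul_sum]
  refine Finset.sum_congr rfl fun k _ => ?_
  rw [S.ric_symm j k]
  linear_combination (S.h i k * S.ric k j) * two_half (A := A)

lemma bchr_szs (i j : Fin n) : S.bchr φ u i.succ 0 j.succ = S.ricUp i j := by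
  rw [← S.bchr_ssz φ u]
  simp only [bchr, Fin.sum_univ_succ, bh_succ_zero, bh_succ_succ, bd_zero, bd_succ, bg_zero_succ,
    bg_succ_zero, bg_succ_succ, map_zero, zero_mul, zero_add, sub_zero, add_zero]

lemma bchr_zsz (hφ : ∀ D : Derivation ℝ A A, D φ = D S.scal) (i : Fin n) :
    S.bchr φ u 0 i.succ 0 = half A * u * S.d i S.scal := by
  simp only [bchr, Fin.sum_univ_succ, bh_zero_zero, bh_zero_succ, bd_zero, bd_succ, bg_succ_zero,
    bg_zero_zero, map_zero, zero_mul, Finset.sum_const_zero, hφ]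
  ring

lemma bchr_zzs (hφ : ∀ D : Derivation ℝ A A, D φ = D S.scal) (i : Fin n) :
    S.bchr φ u 0 0 i.succ = half A * u * S.d i S.scal := by
  simp only [bchr, Fin.sum_univ_succ, bh_zero_zero, bh_zero_succ, bd_zero, bd_succ, bg_succ_zero,
    bg_zero_zero, bg_zero_succ, map_zero, zero_mul, Finset.sum_const_zero, hφ]
  ring

lemma bchr_zzz (hφ : ∀ D : Derivation ℝ A A, D φ = D S.scal) :
    S.bchr φ u 0 0 0 = half A * u * S.T S.scal := by
  simp only [bchr, Fin.sum_univ_succ, bh_zero_zero, bh_zero_succ, bd_zero,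
    bg_zero_zero, zero_mul, Finset.sum_const_zero, hφ]
  ring

lemma bchr_szz (hφ : ∀ D : Derivation ℝ A A, D φ = D S.scal) (i : Fin n) :
    S.bchr φ u i.succ 0 0 = -(half A * S.grad i) := by
  simp only [bchr, Fin.sum_univ_succ, bh_succ_zero, bh_succ_succ, bd_zero, bd_succ, bg_zero_succ,
    bg_zero_zero, map_zero, zero_mul, hφ, grad, zero_add, zero_sub, mul_neg,
    Finset.sum_neg_distrib]

lemma der_u (hφ : ∀ D : Derivation ℝ A A, D φ = D S.scal) (hu : φ * u = 1)
    (D : Derivation ℝ A A) : D u = -(u ^ 2 * D S.scal) := by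
  have h1 : D φ * u + φ * D u = 0 := by rw [← der_mul, hu, D.map_one_eq_zero]
  rw [hφ] at h1
  linear_combination u * h1 - D u * hu

end

/-- The spatial components of the space-time Ricci tensor are those of `Ric` up to `O(u)`. The
hypothesis on `φ` says that it has the same derivatives as `R`, like `N + R`; it is essential that
`P` and `Q` are chosen before `φ` and `u`. -/
lemma bric_ss (i j : Fin n) : ∃ P Q : A, ∀ φ u : A, (∀ D : Derivation ℝ A A, D φ = D S.scal) →
    φ * u = 1 → S.bric φ u i.succ j.succ = S.ric i j + u * P + u ^ 2 * Q := by
  refine ⟨-S.T (S.ric i j) - half A * S.d j (S.d i S.scal) - S.ric i j * S.scal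
    + half A * ∑ k, S.chr k i j * S.d k S.scal
    + ∑ k, S.ricUp k i * S.ric j k + ∑ k, S.ric i k * S.ricUp k j,
    S.T S.scal * S.ric i j + half A * (S.d i S.scal * S.d j S.scal)
      - half A * (S.ric i j * S.T S.scal) - half A ^ 2 * (S.d i S.scal * S.d j S.scal), ?_⟩
  intro φ u hφ hu
  simp only [bric, Fin.sum_univ_succ, bd_zero, bd_succ, bchr_sss, bchr_zss, bchr_ssz, bchr_szs,
    bchr_zsz _ _ _ hφ, bchr_zzz _ _ _ hφ, Finset.sum_add_distrib, map_add, map_neg, der_mul,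
    der_half, S.der_u φ u hφ hu]
  have r : S.ric i j = (∑ k, S.d k (S.chr k i j)) - S.d j (∑ k, S.chr k i k)
    + (∑ k, ∑ l, S.chr k i j * S.chr l k l) - ∑ k, ∑ l, S.chr l i k * S.chr k j l := by
    rw [Geom.ric]
    simp only [S.chr_symm _ j]
  have e1 : ∑ l, -(u * S.ric i j) * S.ricUp l l = -(u * S.ric i j) * S.scal := by
    rw [← Finset.mul_sum, S.sum_ricUp S.ric_symm]
  have e2 : ∑ k, S.chr k i j * (half A * u * S.d k S.scal)
      = half A * u * ∑ k, S.chr k i j * S.d k S.scal := by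
    rw [Finset.mul_sum]; exact Finset.sum_congr rfl fun k _ => by ring
  have e3 : ∑ k, S.ricUp k i * -(u * S.ric j k) = -(u * ∑ k, S.ricUp k i * S.ric j k) := by
    rw [Finset.mul_sum, ← Finset.sum_neg_distrib]; exact Finset.sum_congr rfl fun k _ => by ring
  have e4 : ∑ k, -(u * S.ric i k) * S.ricUp k j = -(u * ∑ k, S.ric i k * S.ricUp k j) := by
    rw [Finset.mul_sum, ← Finset.sum_neg_distrib]; exact Finset.sum_congr rfl fun k _ => by ring
  rw [e1, e2, e3, e4]
  linear_combination -r

/-- The mixed components are `-∂_i R / 2` up to `O(u)`, by the contracted Bianchi identity. -/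
lemma bric_sz (i : Fin n) : ∃ P Q : A, ∀ φ u : A, (∀ D : Derivation ℝ A A, D φ = D S.scal) →
    φ * u = 1 → S.bric φ u i.succ 0 = -(half A * S.d i S.scal) + u * P + u ^ 2 * Q := by
  refine ⟨half A * (S.d i S.scal * S.scal) - half A * ∑ k, S.ric i k * S.grad k, 0, ?_⟩
  intro φ u hφ hu
  simp only [bric, Fin.sum_univ_succ, bd_zero, bd_succ, bchr_sss, bchr_zss, bchr_ssz, bchr_szs,
    bchr_zsz _ _ _ hφ, bchr_zzs _ _ _ hφ, bchr_zzz _ _ _ hφ, bchr_szz _ _ _ hφ,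
    Finset.sum_add_distrib, map_add, S.T_trace_chr]
  have hb := S.contracted_bianchi S.ric_symm i
  have e1 : ∑ l, half A * u * S.d i S.scal * S.ricUp l l
      = half A * u * S.d i S.scal * S.scal := by
    rw [← Finset.mul_sum, S.sum_ricUp S.ric_symm]
  have e2 : ∑ k, -(u * S.ric i k) * -(half A * S.grad k)
      = half A * u * ∑ k, S.ric i k * S.grad k := by
    rw [Finset.mul_sum]; exact Finset.sum_congr rfl fun k _ => by ring
  have e3 : ∑ k, ∑ l, S.ricUp k i * S.chr l k l = ∑ i_1, ∑ a, S.chr i_1 a i_1 * S.ricUp a i := by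
    rw [Finset.sum_comm]; simp only [mul_comm]
  have e4 : ∑ k, ∑ l, S.chr l i k * S.ricUp k l = ∑ i_1, ∑ a, S.chr i_1 a i * S.ricUp a i_1 := by
    rw [Finset.sum_comm]; simp only [S.chr_symm _ i]
  rw [e1, e2, e3, e4]
  linear_combination half A * hb - (∑ x, S.d x (S.ricUp x i) + ∑ x, ∑ a, S.chr x a x * S.ricUp a i
    - ∑ x, ∑ a, S.chr x a i * S.ricUp a x - S.d i S.scal) * two_half (A := A)

/-- The time component is `-∂_τ R / 2` up to `O(u)`, by the evolution equation of `R`. -/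
lemma bric_zz : ∃ P Q : A, ∀ φ u : A, (∀ D : Derivation ℝ A A, D φ = D S.scal) →
    φ * u = 1 → S.bric φ u 0 0 = -(half A * S.T S.scal) + u * P + u ^ 2 * Q := by
  refine ⟨half A * (S.T S.scal * S.scal) + half A ^ 2 * ∑ k, S.grad k * S.d k S.scal, 0, ?_⟩
  intro φ u hφ hu
  simp only [bric, Fin.sum_univ_succ, bd_zero, bd_succ, bchr_sss, bchr_szs,
    bchr_zsz _ _ _ hφ, bchr_zzs _ _ _ hφ, bchr_zzz _ _ _ hφ, bchr_szz _ _ _ hφ,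
    Finset.sum_add_distrib, map_add, S.sum_ricUp S.ric_symm, map_neg, der_mul, der_half]
  have hT := S.T_scal
  have e1 : ∑ l, half A * u * S.T S.scal * S.ricUp l l
      = half A * u * S.T S.scal * S.scal := by
    rw [← Finset.mul_sum, S.sum_ricUp S.ric_symm]
  have e2 : ∑ k, -(half A * S.grad k) * (half A * u * S.d k S.scal)
      = -(half A ^ 2 * u * ∑ k, S.grad k * S.d k S.scal) := by
    rw [Finset.mul_sum, ← Finset.sum_neg_distrib]; exact Finset.sum_congr rfl fun k _ => by ring
  have e2' : ∑ k, (half A * u * S.d k S.scal) * -(half A * S.grad k)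
      = -(half A ^ 2 * u * ∑ k, S.grad k * S.d k S.scal) := by
    rw [Finset.mul_sum, ← Finset.sum_neg_distrib]; exact Finset.sum_congr rfl fun k _ => by ring
  have e3 : ∑ k, ∑ l, -(half A * S.grad k) * S.chr l k l
      = -(half A * ∑ k, ∑ a, S.chr k a k * S.grad a) := by
    rw [Finset.sum_comm]
    simp only [Finset.mul_sum, ← Finset.sum_neg_distrib]
    exact Finset.sum_congr rfl fun k _ => Finset.sum_congr rfl fun k _ => by ring
  have e4 : ∑ k, ∑ l, S.ricUp l k * S.ricUp k l = ∑ i, ∑ k, S.ricUp i k * S.ricUp k i := by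
    rw [Finset.sum_comm]
  have e5 : ∑ k, -(0 * S.grad k + half A * S.d k (S.grad k))
      = -(half A * ∑ k, S.d k (S.grad k)) := by
    rw [Finset.mul_sum, ← Finset.sum_neg_distrib]; exact Finset.sum_congr rfl fun k _ => by ring
  rw [e1, e2, e2', e3, e4, e5]
  linear_combination -(half A * hT)
    + (∑ i, ∑ k, S.ricUp i k * S.ricUp k i + S.T S.scal) * two_half (A := A)

end Flow
end Alg

/-! ### The algebra of smooth functions on an open set -/

namespace Smooth

open TopologicalSpace

variable {V : Type*} [NormedAddCommGroup V] [NormedSpace ℝ V]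

/-- The algebra of smooth real functions on an open set `Ω`: functions on the subtype that extend
to a function on `V` which is smooth on `Ω`. -/
def Sm (Ω : Opens V) : Subalgebra ℝ (Ω → ℝ) where
  carrier := {f | ∃ F : V → ℝ, ContDiffOn ℝ (⊤ : ℕ∞) F Ω ∧ ∀ p : Ω, F p = f p}
  mul_mem' := by
    rintro _ _ ⟨F, hF, hFf⟩ ⟨G, hG, hGg⟩
    exact ⟨fun x => F x * G x, hF.mul hG, fun p => by simp [hFf, hGg]⟩
  add_mem' := by
    rintro _ _ ⟨F, hF, hFf⟩ ⟨G, hG, hGg⟩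
    exact ⟨fun x => F x + G x, hF.add hG, fun p => by simp [hFf, hGg]⟩
  algebraMap_mem' r := ⟨fun _ => r, contDiffOn_const, fun _ => rfl⟩

variable {Ω : Opens V}

/-- The function `F` on `V` restricts to `f` on `Ω`; its values outside `Ω` are irrelevant. -/
def Rep (F : V → ℝ) (f : Sm Ω) : Prop := ∀ p : Ω, F p = f.1 p

lemma Rep.smooth {F : V → ℝ} {f : Sm Ω} (h : Rep F f) : ContDiffOn ℝ (⊤ : ℕ∞) F Ω := by
  obtain ⟨f, G, hG, hGf⟩ := f
  exact hG.congr fun x hx => (h ⟨x, hx⟩).trans (hGf ⟨x, hx⟩).symm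

lemma Rep.unique {F : V → ℝ} {f f' : Sm Ω} (h : Rep F f) (h' : Rep F f') : f = f' :=
  Subtype.ext (funext fun p => (h p).symm.trans (h' p))

/-- The restriction to `Ω` of a function that is smooth on `Ω`. -/
def mk (F : V → ℝ) (hF : ContDiffOn ℝ (⊤ : ℕ∞) F Ω) : Sm Ω := ⟨fun p => F p, F, hF, fun _ => rfl⟩

lemma rep_mk (F : V → ℝ) (hF : ContDiffOn ℝ (⊤ : ℕ∞) F Ω) : Rep F (mk F hF) := fun _ => rfl

/-- A chosen function on `V` restricting to `f`. -/
def lift (f : Sm Ω) : V → ℝ := Classical.choose f.2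

lemma rep_lift (f : Sm Ω) : Rep (lift f) f := (Classical.choose_spec f.2).2

lemma Rep.add {F G : V → ℝ} {f g : Sm Ω} (hF : Rep F f) (hG : Rep G g) :
    Rep (fun x => F x + G x) (f + g) := fun p => by
  change F p + G p = f.1 p + g.1 p
  rw [hF, hG]

lemma Rep.sub {F G : V → ℝ} {f g : Sm Ω} (hF : Rep F f) (hG : Rep G g) :
    Rep (fun x => F x - G x) (f - g) := fun p => by
  change F p - G p = f.1 p - g.1 p
  rw [hF, hG]

lemma Rep.mul {F G : V → ℝ} {f g : Sm Ω} (hF : Rep F f) (hG : Rep G g) :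
    Rep (fun x => F x * G x) (f * g) := fun p => by
  change F p * G p = f.1 p * g.1 p
  rw [hF, hG]

lemma rep_const (r : ℝ) : Rep (fun _ : V => r) (algebraMap ℝ (Sm Ω) r) := fun _ => rfl

lemma rep_zero : Rep (fun _ : V => (0 : ℝ)) (0 : Sm Ω) := fun _ => rfl

lemma Rep.sum {ι : Type*} [Fintype ι] {F : ι → V → ℝ} {f : ι → Sm Ω} (h : ∀ i, Rep (F i) (f i)) :
    Rep (fun x => ∑ i, F i x) (∑ i, f i) := fun p => by
  change _ = (Sm Ω).val (∑ i, f i) p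
  rw [map_sum, Finset.sum_apply]
  exact Finset.sum_congr rfl fun i _ => h i p

lemma Rep.diffAt {F : V → ℝ} {f : Sm Ω} (h : Rep F f) (p : Ω) : DifferentiableAt ℝ F p :=
  (h.smooth.contDiffAt (Ω.isOpen.mem_nhds p.2)).differentiableAt (by simp)

lemma Rep.fderiv_eq {F G : V → ℝ} {f : Sm Ω} (hF : Rep F f) (hG : Rep G f) (p : Ω) :
    fderiv ℝ F p = fderiv ℝ G p := by
  refine Filter.EventuallyEq.fderiv_eq ?_
  filter_upwards [Ω.isOpen.mem_nhds p.2] with x hx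
  exact (hF ⟨x, hx⟩).trans (hG ⟨x, hx⟩).symm

lemma smooth_fderiv {F : V → ℝ} (hF : ContDiffOn ℝ (⊤ : ℕ∞) F Ω) (v : V) :
    ContDiffOn ℝ (⊤ : ℕ∞) (fun x => fderiv ℝ F x v) Ω :=
  (hF.fderiv_of_isOpen Ω.isOpen (by simp)).clm_apply contDiffOn_const

/-- The directional derivative along `v`, as a derivation. -/
def der (v : V) : Derivation ℝ (Sm Ω) (Sm Ω) where
  toFun f := mk (fun x => fderiv ℝ (lift f) x v) (smooth_fderiv (rep_lift f).smooth v)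
  map_add' f g := by
    refine Subtype.ext (funext fun p => ?_)
    change fderiv ℝ (lift (f + g)) p v = fderiv ℝ (lift f) p v + fderiv ℝ (lift g) p v
    rw [(rep_lift (f + g)).fderiv_eq ((rep_lift f).add (rep_lift g)),
      fderiv_fun_add ((rep_lift f).diffAt p) ((rep_lift g).diffAt p)]
    rfl
  map_smul' r f := by
    refine Subtype.ext (funext fun p => ?_)
    change fderiv ℝ (lift (r • f)) p v = r * fderiv ℝ (lift f) p v
    have h1 : Rep (fun x => r * lift f x) (r • f) := fun p => by
      change r * lift f p = r * f.1 p
      rw [rep_lift f p]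
    rw [(rep_lift (r • f)).fderiv_eq h1, fderiv_const_mul ((rep_lift f).diffAt p)]
    rfl
  map_one_eq_zero' := by
    refine Subtype.ext (funext fun p => ?_)
    change fderiv ℝ (lift (1 : Sm Ω)) p v = 0
    have h1 : Rep (fun _ : V => (1 : ℝ)) (1 : Sm Ω) := fun _ => rfl
    rw [(rep_lift (1 : Sm Ω)).fderiv_eq h1 p]
    simp
  leibniz' f g := by
    refine Subtype.ext (funext fun p => ?_)
    change fderiv ℝ (lift (f * g)) p v
      = f.1 p * fderiv ℝ (lift g) p v + g.1 p * fderiv ℝ (lift f) p v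
    rw [(rep_lift (f * g)).fderiv_eq ((rep_lift f).mul (rep_lift g)),
      fderiv_fun_mul ((rep_lift f).diffAt p) ((rep_lift g).diffAt p), ← rep_lift f p,
      ← rep_lift g p]
    rfl

lemma Rep.der {F : V → ℝ} {f : Sm Ω} (h : Rep F f) (v : V) :
    Rep (fun x => fderiv ℝ F x v) (der v f) := fun p => by
  change fderiv ℝ F p v = fderiv ℝ (lift f) p v
  rw [h.fderiv_eq (rep_lift f)]

/-- Symmetry of second derivatives. -/
lemma der_comm (v w : V) (f : Sm Ω) :
    Smooth.der v (Smooth.der w f) = Smooth.der w (Smooth.der v f) := by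
  refine Subtype.ext (funext fun p => ?_)
  set F := lift f
  have hF := rep_lift f
  rw [← (hF.der w).der v p, ← (hF.der v).der w p]
  have hc : ContDiffAt ℝ (⊤ : ℕ∞) F p := hF.smooth.contDiffAt (Ω.isOpen.mem_nhds p.2)
  have hd : DifferentiableAt ℝ (fderiv ℝ F) p :=
    (hc.fderiv_right (m := 1) (by norm_cast)).differentiableAt (by simp)
  have hs : IsSymmSndFDerivAt ℝ F p := hc.isSymmSndFDerivAt (by
    simp only [minSmoothness_of_isRCLikeNormedField]; norm_cast)
  change fderiv ℝ (fun x => fderiv ℝ F x w) p v = fderiv ℝ (fun x => fderiv ℝ F x v) p w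
  rw [fderiv_clm_apply hd (differentiableAt_const _), fderiv_clm_apply hd (differentiableAt_const _)]
  simpa using hs v w

lemma exists_inv {f : Sm Ω} (hf : ∀ p, f.1 p ≠ 0) : ∃ u : Sm Ω, f * u = 1 := by
  have h := (rep_lift f).smooth.inv fun x hx => by
    rw [rep_lift f ⟨x, hx⟩]; exact hf _
  refine ⟨mk _ h, Subtype.ext (funext fun p => ?_)⟩
  change f.1 p * (lift f p)⁻¹ = 1
  rw [rep_lift f p]
  exact mul_inv_cancel₀ (hf p)

/-- Evaluation at a point. -/
def ev (p : Ω) : Sm Ω →+* ℝ := (Pi.evalRingHom (fun _ : Ω => ℝ) p).comp (Sm Ω).val.toRingHom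

lemma ev_apply (p : Ω) (f : Sm Ω) : ev p f = f.1 p := rfl

lemma bounded_on_compact (f : Sm Ω) {K : Set V} (hK : IsCompact K) (hKΩ : K ⊆ Ω) :
    ∃ C : ℝ, 0 ≤ C ∧ ∀ p : Ω, p.1 ∈ K → |f.1 p| ≤ C := by
  obtain ⟨C, hC⟩ := hK.exists_bound_of_continuousOn ((rep_lift f).smooth.continuousOn.mono hKΩ)
  refine ⟨max C 0, le_max_right _ _, fun p hp => ?_⟩
  rw [← rep_lift f p]
  exact (hC p hp).trans (le_max_left _ _)

end Smooth

/-! ### From the algebraic setting to the coordinate expressions -/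

section Transfer

open Smooth TopologicalSpace Alg

variable {n : ℕ} {Ω : Opens (E n)} {g : E n → Matrix (Fin n) (Fin n) ℝ}

/-- A smooth positive definite `g` is a metric over the algebra of smooth functions: its determinant
is invertible there, so the inverse matrix has smooth entries. -/
lemma exists_geom (hsmooth : ∀ i j, ContDiffOn ℝ (⊤ : ℕ∞) (fun p => g p i j) Ω)
    (hsymm : ∀ p ∈ Ω, (g p).IsSymm) (hpos : ∀ p ∈ Ω, (g p).PosDef) :
    ∃ S : Geom n (Sm Ω), (∀ i, S.d i = der (dir i.succ)) ∧
      (∀ i j, Rep (fun p => g p i j) (S.g i j)) ∧ ∀ i j, Rep (fun p => ginv g p i j) (S.h i j) := by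
  let G : Matrix (Fin n) (Fin n) (Sm Ω) := Matrix.of fun i j => mk _ (hsmooth i j)
  have hG : ∀ p : Ω, (ev p).mapMatrix G = g p := fun p => rfl
  obtain ⟨u, hu⟩ := exists_inv (f := G.det) (fun p => by
    rw [← ev_apply, RingHom.map_det, hG]
    exact (hpos p p.2).det_pos.ne')
  have hdet : IsUnit G.det := IsUnit.of_mul_eq_one u hu
  have hmul := Matrix.mul_nonsing_inv G hdet
  refine ⟨⟨fun i => der (dir i.succ), fun i j x => der_comm _ _ _, G, G⁻¹, fun i j => ?_, hmul⟩,
    fun i => rfl, fun i j => rep_mk _ (hsmooth i j), fun i j p => ?_⟩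
  · exact Subtype.ext (funext fun p => (hsymm p p.2).apply j i)
  · have h1 : g p * (ev p).mapMatrix G⁻¹ = 1 := by
      rw [← hG, ← map_mul, hmul, map_one]
    change (g p)⁻¹ i j = _
    rw [Matrix.inv_eq_right_inv h1]
    rfl

variable {S : Geom n (Sm Ω)}

lemma rep_pdx (hd : ∀ i, S.d i = der (dir i.succ)) {F : E n → ℝ} {f : Sm Ω} (h : Rep F f)
    (i : Fin n) : Rep (pdx i F) (S.d i f) := by
  rw [hd]; exact h.der _

lemma rep_chr (hd : ∀ i, S.d i = der (dir i.succ))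
    (hg : ∀ i j, Rep (fun p => g p i j) (S.g i j))
    (hh : ∀ i j, Rep (fun p => ginv g p i j) (S.h i j)) (i j k : Fin n) :
    Rep (Chr g i j k) (S.chr i j k) :=
  (rep_const _).mul (Rep.sum fun l => (hh i l).mul
    (((rep_pdx hd (hg k l) j).add (rep_pdx hd (hg j l) k)).sub (rep_pdx hd (hg j k) l)))

lemma rep_ric (hd : ∀ i, S.d i = der (dir i.succ))
    (hg : ∀ i j, Rep (fun p => g p i j) (S.g i j))
    (hh : ∀ i j, Rep (fun p => ginv g p i j) (S.h i j)) (j k : Fin n) :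
    Rep (Ric g j k) (S.ric j k) :=
  have hc := rep_chr hd hg hh
  (((Rep.sum fun i => rep_pdx hd (hc i j k) i).sub
    (rep_pdx hd (Rep.sum fun i => hc i j i) k)).add
    (Rep.sum fun i => Rep.sum fun l => (hc i j k).mul (hc l i l))).sub
    (Rep.sum fun i => Rep.sum fun l => (hc l j i).mul (hc i l k))

lemma rep_scal (hd : ∀ i, S.d i = der (dir i.succ))
    (hg : ∀ i j, Rep (fun p => g p i j) (S.g i j))
    (hh : ∀ i j, Rep (fun p => ginv g p i j) (S.h i j)) :
    Rep (CanonicalSoliton.scal g) S.scal :=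
  Rep.sum fun j => Rep.sum fun k => (hh j k).mul (rep_ric hd hg hh j k)

lemma rep_barRic {S : Flow n (Sm Ω)} (hd : ∀ i, S.d i = der (dir i.succ)) (hT : S.T = der (dir 0))
    (hg : ∀ i j, Rep (fun p => g p i j) (S.g i j))
    (hh : ∀ i j, Rep (fun p => ginv g p i j) (S.h i j)) (N : ℕ) {u : Sm Ω}
    (hu : (algebraMap ℝ (Sm Ω) N + S.scal) * u = 1) (a b : Fin (n + 1)) :
    Rep (barRic g N a b) (S.bric (algebraMap ℝ (Sm Ω) N + S.scal) u a b) := by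
  set φ := algebraMap ℝ (Sm Ω) N + S.scal with hφ
  have rφ : Rep (fun p => (N : ℝ) + CanonicalSoliton.scal g p) φ :=
    (rep_const _).add (rep_scal hd hg hh)
  have ru : Rep (fun p => ((N : ℝ) + CanonicalSoliton.scal g p)⁻¹) u := fun p => by
    refine inv_eq_of_mul_eq_one_right ?_
    have h1 : (N : ℝ) + CanonicalSoliton.scal g p = φ.1 p := rφ p
    rw [h1]
    exact congrFun (congrArg Subtype.val hu) p
  have rd : ∀ (a : Fin (n + 1)) {F : E n → ℝ} {f : Sm Ω}, Rep F f → Rep (pd a F) (S.bd a f) := by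
    intro a F f h
    have e : S.bd a = der (dir a) := by
      refine Fin.cases hT (fun i => ?_) a
      rw [S.bd_succ, hd]
    rw [e]; exact h.der _
  have rg : ∀ a b, Rep (barg g N a b) (S.bg φ a b) := by
    intro a b
    refine Fin.cases (Fin.cases rφ (fun _ => rep_zero) b)
      (fun i => Fin.cases rep_zero (fun j => hg i j) b) a
  have rh : ∀ a b, Rep (barginv g N a b) (S.bh u a b) := by
    intro a b
    refine Fin.cases (Fin.cases ru (fun _ => rep_zero) b)
      (fun i => Fin.cases rep_zero (fun j => hh i j) b) a
  have rc : ∀ a b c, Rep (barChr g N a b c) (S.bchr φ u a b c) := fun a b c =>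
    (rep_const _).mul (Rep.sum fun d => (rh a d).mul
      (((rd b (rg c d)).add (rd c (rg b d))).sub (rd d (rg b c))))
  exact (((Rep.sum fun c => rd c (rc c a b)).sub
    (rd b (Rep.sum fun c => rc c a c))).add
    (Rep.sum fun c => Rep.sum fun d => (rc c a b).mul (rc d c d))).sub
    (Rep.sum fun c => Rep.sum fun d => (rc d a c).mul (rc c b d))

/-- A smooth solution of the reverse Ricci flow is an algebraic solution over `Sm Ω`. -/
lemma exists_flow {U : Set (Fin n → ℝ)} {a b : ℝ} (hΩ : (Ω : Set (E n)) = U ×ˢ Set.Ioo a b)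
    (hsmooth : ∀ i j, ContDiffOn ℝ (⊤ : ℕ∞) (fun p => g p i j) (U ×ˢ Set.Ioo a b))
    (hsymm : ∀ p ∈ U ×ˢ Set.Ioo a b, (g p).IsSymm)
    (hpos : ∀ p ∈ U ×ˢ Set.Ioo a b, (g p).PosDef)
    (hflow : ∀ p ∈ U ×ˢ Set.Ioo a b, ∀ j k : Fin n,
      pdt (fun q => g q j k) p = 2 * Ric g j k p) :
    ∃ S : Flow n (Sm Ω), (∀ i, S.d i = der (dir i.succ)) ∧ S.T = der (dir 0) ∧
      (∀ i j, Rep (fun p => g p i j) (S.g i j)) ∧ ∀ i j, Rep (fun p => ginv g p i j) (S.h i j) := by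
  rw [← hΩ] at hsmooth hsymm hpos hflow
  obtain ⟨S, hd, hg, hh⟩ := exists_geom hsmooth hsymm hpos
  refine ⟨{ S with T := der (dir 0), T_comm := fun i x => ?_, flow := fun j k => ?_ },
    hd, rfl, hg, hh⟩
  · rw [hd]; exact der_comm _ _ _
  · refine Subtype.ext (funext fun p => ?_)
    rw [← (hg j k).der (dir 0) p]
    refine (hflow p p.2 j k).trans ?_
    rw [rep_ric hd hg hh j k p]
    rfl

/-- An error term `u P + u² Q` with `u ≤ 2 / N` is `O(1 / N)` on compact sets, with a constant
depending only on `P` and `Q`. -/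
lemma error_bound (P Q : Sm Ω) {K : Set (E n)} (hK : IsCompact K) (hKΩ : K ⊆ Ω) :
    ∃ C : ℝ, 0 ≤ C ∧ ∀ N : ℕ, 1 ≤ N → ∀ p : Ω, p.1 ∈ K → ∀ x y u : Sm Ω, |u.1 p| ≤ 2 / N →
      x = y + u * P + u ^ 2 * Q → |x.1 p - y.1 p| ≤ C / N := by
  obtain ⟨M, hM0, hM⟩ := bounded_on_compact P hK hKΩ
  obtain ⟨M', hM'0, hM'⟩ := bounded_on_compact Q hK hKΩ
  refine ⟨2 * M + 4 * M', by positivity, fun N hN p hp x y u hu hx => ?_⟩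
  have hN' : (1 : ℝ) ≤ N := by exact_mod_cast hN
  have e : x.1 p - y.1 p = u.1 p * P.1 p + u.1 p ^ 2 * Q.1 p := by
    rw [hx]
    change y.1 p + u.1 p * P.1 p + u.1 p ^ 2 * Q.1 p - y.1 p = _
    ring
  have h2 : |u.1 p| ^ 2 ≤ 4 / N := by
    calc |u.1 p| ^ 2 ≤ (2 / (N : ℝ)) ^ 2 := by gcongr
      _ = 4 / (N : ℝ) * (1 / (N : ℝ)) := by ring
      _ ≤ 4 / (N : ℝ) * 1 := by
        gcongr
        rw [div_le_one (by linarith)]; exact hN'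
      _ = 4 / (N : ℝ) := mul_one _
  calc |x.1 p - y.1 p| ≤ |u.1 p| * |P.1 p| + |u.1 p| ^ 2 * |Q.1 p| := by
        rw [e, ← abs_mul, ← abs_pow, ← abs_mul]; exact abs_add_le _ _
    _ ≤ 2 / N * M + 4 / N * M' := by
        gcongr
        exacts [hM p hp, hM' p hp]
    _ = (2 * M + 4 * M') / N := by ring

end Transfer

end CanonicalSoliton

/-! ### The asymptotics of the Ricci curvature -/

open CanonicalSoliton

theorem stmt16 (n : ℕ) (U : Set (Fin n → ℝ)) (hU : IsOpen U)
    (a b : ℝ) (hab : a < b)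
    (g : E n → Matrix (Fin n) (Fin n) ℝ)
    (hsmooth : ∀ i j, ContDiffOn ℝ (⊤ : ℕ∞) (fun p => g p i j) (U ×ˢ Set.Ioo a b))
    (hsymm : ∀ p ∈ U ×ˢ Set.Ioo a b, (g p).IsSymm)
    (hpos : ∀ p ∈ U ×ˢ Set.Ioo a b, (g p).PosDef)
    (hflow : ∀ p ∈ U ×ˢ Set.Ioo a b, ∀ j k : Fin n,
      pdt (fun q => g q j k) p = 2 * Ric g j k p)
    (hRbd : ∃ C : ℝ, ∀ p ∈ U ×ˢ Set.Ioo a b, |scal g p| ≤ C) :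
    ∀ K : Set (E n), K ⊆ U ×ˢ Set.Ioo a b → IsCompact K →
      ∃ N₀ : ℕ, ∃ C : ℝ, 0 < C ∧ ∀ N : ℕ, N₀ ≤ N →
        (∃ V : Set (E n), IsOpen V ∧ K ⊆ V ∧ V ⊆ U ×ˢ Set.Ioo a b ∧
          ∀ p ∈ V, 0 < (N : ℝ) + scal g p) ∧
        ∀ p ∈ K, ∀ i j : Fin n,
          |barRic g N i.succ j.succ p - Ric g i j p| ≤ C / (N : ℝ) ∧
          |barRic g N i.succ 0 p + (1 / 2) * pdx i (scal g) p| ≤ C / (N : ℝ) ∧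
          |barRic g N 0 0 p + scalτ g p / 2| ≤ C / (N : ℝ) := by
  intro K hKU hK
  let Ω : TopologicalSpace.Opens (E n) := ⟨U ×ˢ Set.Ioo a b, hU.prod isOpen_Ioo⟩
  obtain ⟨S, hd, hT, hg, hh⟩ := exists_flow (Ω := Ω) rfl hsmooth hsymm hpos hflow
  have hs := rep_scal hd hg hh
  obtain ⟨C₀, hC₀⟩ := hRbd
  choose Pss Qss hss using S.bric_ss
  choose Psz Qsz hsz using S.bric_sz
  obtain ⟨Pzz, Qzz, hzz⟩ := S.bric_zz
  choose Css Css0 hCss using fun i j => error_bound (Pss i j) (Qss i j) hK hKU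
  choose Csz Csz0 hCsz using fun i => error_bound (Psz i) (Qsz i) hK hKU
  obtain ⟨Czz, Czz0, hCzz⟩ := error_bound Pzz Qzz hK hKU
  obtain ⟨N₀, hN₀⟩ := exists_nat_gt (2 * |C₀|)
  have s1 : 0 ≤ ∑ i, ∑ j, Css i j :=
    Finset.sum_nonneg fun i _ => Finset.sum_nonneg fun j _ => Css0 i j
  have s2 : 0 ≤ ∑ i, Csz i := Finset.sum_nonneg fun i _ => Csz0 i
  refine ⟨N₀ + 1, 1 + ∑ i, ∑ j, Css i j + ∑ i, Csz i + Czz, by positivity, fun N hN => ?_⟩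
  have hN1 : 1 ≤ N := by omega
  have hNpos : (0 : ℝ) < N := by exact_mod_cast hN1
  -- For these `N`, `N + R` is at least `N / 2`, so that `ḡ` is nondegenerate and `u ≤ 2 / N`.
  have hlow : ∀ p ∈ U ×ˢ Set.Ioo a b, (N : ℝ) / 2 ≤ N + scal g p := by
    intro p hp
    have h1 := (abs_le.mp (hC₀ p hp)).1
    have h2 := le_abs_self C₀
    have h3 : (N₀ : ℝ) ≤ N := by exact_mod_cast (by omega : N₀ ≤ N)
    linarith
  refine ⟨⟨U ×ˢ Set.Ioo a b, Ω.isOpen, hKU, le_rfl, fun p hp => by linarith [hlow p hp]⟩, ?_⟩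
  have hφ : ∀ p : Ω, (algebraMap ℝ (Smooth.Sm Ω) N + S.scal).1 p = N + scal g p := fun p => by
    rw [hs p]; rfl
  obtain ⟨u, hu⟩ := Smooth.exists_inv (f := algebraMap ℝ (Smooth.Sm Ω) N + S.scal) fun p => by
    rw [hφ]; linarith [hlow p p.2]
  have hD : ∀ D : Derivation ℝ (Smooth.Sm Ω) (Smooth.Sm Ω),
      D (algebraMap ℝ (Smooth.Sm Ω) N + S.scal) = D S.scal := fun D => by
    rw [map_add, D.map_algebraMap, zero_add]
  have hR := rep_barRic hd hT hg hh N hu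
  intro p hp i j
  set q : Ω := ⟨p, hKU hp⟩
  have hub : |u.1 q| ≤ 2 / N := by
    have h1 : (N + scal g p) * u.1 q = 1 := by
      rw [← hφ q]; exact congrFun (congrArg Subtype.val hu) q
    have h2 := hlow p (hKU hp)
    rw [eq_inv_of_mul_eq_one_right h1, abs_of_nonneg (by rw [inv_nonneg]; linarith),
      ← inv_div]
    exact inv_anti₀ (by positivity) h2
  have ess := hCss i j N hN1 q hp _ _ u hub (hss i j _ u hD hu)
  have esz := hCsz i N hN1 q hp _ _ u hub (hsz i _ u hD hu)
  have ezz := hCzz N hN1 q hp _ _ u hub (hzz _ u hD hu)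
  have l1 : Css i j ≤ ∑ i, ∑ j, Css i j :=
    (Finset.single_le_sum (f := fun j => Css i j) (fun j _ => Css0 i j) (Finset.mem_univ j)).trans
      (Finset.single_le_sum (f := fun i => ∑ j, Css i j)
        (fun i _ => Finset.sum_nonneg fun j _ => Css0 i j) (Finset.mem_univ i))
  have l2 : Csz i ≤ ∑ i, Csz i :=
    Finset.single_le_sum (f := Csz) (fun i _ => Csz0 i) (Finset.mem_univ i)
  have r1 : Ric g i j p = (S.ric i j).1 q := rep_ric hd hg hh i j q
  have r2 : pdx i (scal g) p = (S.d i S.scal).1 q := rep_pdx hd hs i q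
  have r3 : scalτ g p = (S.T S.scal).1 q := by rw [hT]; exact hs.der (dir 0) q
  refine ⟨?_, ?_, ?_⟩
  · rw [r1, show barRic g N i.succ j.succ p = _ from hR i.succ j.succ q]
    refine ess.trans ?_
    gcongr
    linarith
  · rw [r2, show barRic g N i.succ 0 p = _ from hR i.succ 0 q, ← sub_neg_eq_add]
    refine le_trans esz ?_
    gcongr
    linarith
  · rw [r3, show barRic g N 0 0 p = _ from hR 0 0 q, ← sub_neg_eq_add,
      div_eq_inv_mul, ← one_div]
    refine le_trans ezz ?_
    gcongr
    linarith
end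
end

section
/- Canonical steady soliton equation (Theorem 5.1): for every compact set K ⊆ U × (a,b) there exist N₀ ∈ ℕ and C > 0 such that for every integer N ≥ N₀ one has N + R > 0 on a neighbourhood of K, and at every point of K, every component of Ric(ḡ) + Hess_{ḡ}(−Nτ) is bounded in magnitude by C/N; that is, for all i, j ∈ {1, …, n}: |R̄_{ij} + ∇̄²_{ij}(−Nτ)| ≤ C/N, |R̄_{i0} + ∇̄²_{i0}(−Nτ)| ≤ C/N, and |R̄₀₀ + ∇̄²_{00}(−Nτ)| ≤ C/N, where −Nτ denotes the function (x,τ) ↦ −Nτ on Û. -/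
/-!
The tensor `Ric(ḡ) + Hess(-Nτ)` is expanded in powers of `u = (N + R)⁻¹`. The Christoffel symbols
`Γ̄^k_{ab}` with spatial upper index do not depend on `N` (`connS`), while `Γ̄^0_{ab}` is `u` times
a quantity independent of `N` (`connT`). The Hessian of `-Nτ` is
`N Γ̄^0_{ab} = N u connT = connT - R u connT`, and `∂u = -u² ∂R`, so
`Ric(ḡ) + Hess(-Nτ) = leading + u coeff₁ + u² coeff₂` with all three coefficients smooth and
independent of `N` (`stRic_expansion`).

The leading coefficient vanishes identically. For two spatial indices it is `R_{ij} - R_{ij}`, by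
the definition of the Ricci tensor. For the mixed components it is `∇_k R^k_i - ½ ∂_i R`, once
`∂_τ Γ^k_{ik} = ∂_i R` (`T_trace`) is used, and this is zero by the contracted second Bianchi
identity (`contracted_bianchi`). For the time component it is
`-½ (∂_τ R + Δ R + 2 |Ric|²)`, which is zero by the evolution equation of the scalar curvature
(`T_scal`). The latter rests on `g^{jk} ∂_τ Γ^i_{jk} = 0` (`T_harmonic`), again a consequence of the
contracted Bianchi identity. Since `R` is bounded, `0 < u ≤ 2 / N` for large `N`, and `coeff₁`,
`coeff₂` are bounded on the compact set `K`, which gives the estimate.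

All tensor identities are proved in a commutative `ℝ`-algebra with commuting derivations. They are
applied to the algebra `smoothFn W` of smooth functions on `W = U × (a, b)`; the predicate `Rep`
relates its elements to functions on all of space-time, whose values outside `W` are irrelevant.
-/

noncomputable section

open scoped BigOperators

open CanonicalSoliton

namespace SteadySoliton

section Algebra

/-! ### Curvature identities for a Levi-Civita connection -/

open Matrix

variable {A : Type*} [CommRing A] [Algebra ℝ A] {n : ℕ}

/-- A derivation applied entrywise to a matrix. -/
def dm (d : Derivation ℝ A A) (M : Matrix (Fin n) (Fin n) A) : Matrix (Fin n) (Fin n) A :=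
  M.map d

variable (d e : Derivation ℝ A A) (M N : Matrix (Fin n) (Fin n) A)

lemma dm_apply (i j : Fin n) : dm d M i j = d (M i j) := rfl

lemma dm_add : dm d (M + N) = dm d M + dm d N := by
  ext i j; simp [dm_apply]

lemma dm_sub : dm d (M - N) = dm d M - dm d N := by
  ext i j; simp [dm_apply]

lemma dm_neg : dm d (-M) = -dm d M := by
  ext i j; simp [dm_apply]

lemma dm_mul : dm d (M * N) = dm d M * N + M * dm d N := by
  ext i j
  simp only [dm_apply, Matrix.mul_apply, Matrix.add_apply, map_sum, Derivation.leibniz,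
    smul_eq_mul, Finset.sum_add_distrib]
  rw [add_comm]
  congr 1
  exact Finset.sum_congr rfl fun k _ => mul_comm _ _

lemma dm_transpose : dm d Mᵀ = (dm d M)ᵀ := rfl

lemma dm_one : dm d (1 : Matrix (Fin n) (Fin n) A) = 0 := by
  ext i j
  by_cases h : i = j
  · subst h; simp [dm_apply]
  · simp [dm_apply, h]

lemma dm_comm (h : ∀ f, d (e f) = e (d f)) : dm d (dm e M) = dm e (dm d M) := by
  ext i j; exact h _

lemma d_trace : d (trace M) = trace (dm d M) := by
  simp [trace, dm_apply]

/-- Algebraic model of a metric `G` with inverse `H` and Levi-Civita connection: the ring `A`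
plays the role of the smooth functions, `D i` of `∂_{xⁱ}`, and `Γ i k j` is `Γ^k_{ij}`, so that
`Γ i` is the connection matrix of `∇_i` acting on vector fields. -/
structure LeviCivita (D : Fin n → Derivation ℝ A A) (G H : Matrix (Fin n) (Fin n) A)
    (Γ : Fin n → Matrix (Fin n) (Fin n) A) : Prop where
  comm : ∀ i j f, D i (D j f) = D j (D i f)
  symm : Gᵀ = G
  inv : G * H = 1
  torsion : ∀ i j k, Γ i k j = Γ j k i
  compat : ∀ i, dm (D i) G = (Γ i)ᵀ * G + G * Γ i

/-- Curvature as a matrix-valued two-form, `F_{ij} = ∂_i Γ_j - ∂_j Γ_i + [Γ_i, Γ_j]`. -/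
def curv (D : Fin n → Derivation ℝ A A) (Γ : Fin n → Matrix (Fin n) (Fin n) A) (i j : Fin n) :
    Matrix (Fin n) (Fin n) A :=
  dm (D i) (Γ j) - dm (D j) (Γ i) + Γ i * Γ j - Γ j * Γ i

/-- Ricci tensor, with the indices arranged as in the coordinate formula for `R_{jk}`. -/
def ric (D : Fin n → Derivation ℝ A A) (Γ : Fin n → Matrix (Fin n) (Fin n) A) :
    Matrix (Fin n) (Fin n) A := Matrix.of fun j k =>
  (∑ i, D i (Γ j i k)) - D k (∑ i, Γ j i i)
    + (∑ i, ∑ l, Γ j i k * Γ i l l) - ∑ i, ∑ l, Γ j l i * Γ l i k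

variable {D : Fin n → Derivation ℝ A A} {G H : Matrix (Fin n) (Fin n) A}
  {Γ : Fin n → Matrix (Fin n) (Fin n) A}

namespace LeviCivita

variable (hL : LeviCivita D G H Γ)
include hL

lemma inv' : H * G = 1 := mul_eq_one_comm.mp hL.inv

lemma Hsymm : Hᵀ = H := by
  have h : Hᵀ * G = 1 := by
    have := congrArg transpose hL.inv
    simpa [hL.symm] using this
  calc Hᵀ = Hᵀ * (G * H) := by rw [hL.inv, mul_one]
    _ = H := by rw [← mul_assoc, h, one_mul]

lemma Hs (i j : Fin n) : H i j = H j i := congrFun (congrFun hL.Hsymm j) i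

lemma dm_inv (d : Derivation ℝ A A) : dm d H = -(H * dm d G * H) := by
  have h : dm d G * H + G * dm d H = 0 := by rw [← dm_mul, hL.inv, dm_one]
  have h2 : H * (dm d G * H) + H * (G * dm d H) = 0 := by rw [← mul_add, h, mul_zero]
  rw [← mul_assoc H G, hL.inv', one_mul, ← mul_assoc] at h2
  exact eq_neg_of_add_eq_zero_right h2

lemma compat_inv (i : Fin n) : dm (D i) H = -(Γ i * H) - H * (Γ i)ᵀ := by
  rw [hL.dm_inv, hL.compat, mul_add, add_mul, ← mul_assoc H G, hL.inv', one_mul, mul_assoc H,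
    mul_assoc, hL.inv, mul_one]
  abel

lemma compat_inv_apply (i j k : Fin n) :
    D i (H j k) = -(∑ p, Γ i j p * H p k) - ∑ p, H j p * Γ i k p := by
  have := congrFun (congrFun (hL.compat_inv i) j) k
  simpa [dm_apply, Matrix.mul_apply] using this

/-- Antisymmetry of the curvature in its two fibre indices: `∂_i ∂_j g` is symmetric in `i, j`. -/
lemma curv_anti (i j : Fin n) : (curv D Γ i j * H)ᵀ = -(curv D Γ i j * H) := by
  have h := dm_comm (D i) (D j) G (hL.comm i j)
  rw [hL.compat j, hL.compat i, dm_add, dm_add, dm_mul, dm_mul, dm_mul, dm_mul, hL.compat j,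
    hL.compat i, dm_transpose, dm_transpose] at h
  have h2 : (curv D Γ i j)ᵀ * G + G * curv D Γ i j = 0 := by
    rw [← sub_eq_zero] at h
    rw [← h, curv]
    simp only [transpose_add, transpose_sub, transpose_mul]
    noncomm_ring
  have h3 : H * ((curv D Γ i j)ᵀ * G + G * curv D Γ i j) * H = 0 := by rw [h2]; simp
  rw [mul_add, add_mul, ← mul_assoc H G, hL.inv', one_mul, ← mul_assoc, mul_assoc _ G H,
    hL.inv, mul_one] at h3
  rw [transpose_mul, hL.Hsymm]
  exact eq_neg_of_add_eq_zero_left h3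

/-- The second Bianchi identity `∇_m F_{ij} + ∇_i F_{jm} + ∇_j F_{mi} = 0`, with the second fibre
index raised, `∇_m` acting on the two fibre indices only. -/
lemma bianchi (m i j : Fin n) :
    (dm (D m) (curv D Γ i j * H) + Γ m * (curv D Γ i j * H) + curv D Γ i j * H * (Γ m)ᵀ) +
    (dm (D i) (curv D Γ j m * H) + Γ i * (curv D Γ j m * H) + curv D Γ j m * H * (Γ i)ᵀ) +
    (dm (D j) (curv D Γ m i * H) + Γ j * (curv D Γ m i * H) + curv D Γ m i * H * (Γ j)ᵀ) = 0 := by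
  have key : ∀ m i j, dm (D m) (curv D Γ i j * H) + Γ m * (curv D Γ i j * H)
      + curv D Γ i j * H * (Γ m)ᵀ
      = (dm (D m) (curv D Γ i j) + Γ m * curv D Γ i j - curv D Γ i j * Γ m) * H := by
    intro m i j
    rw [dm_mul, hL.compat_inv]
    noncomm_ring
  rw [key, key, key, ← add_mul, ← add_mul]
  convert zero_mul H
  simp only [curv, dm_add, dm_sub, dm_mul]
  rw [dm_comm (D m) (D j) _ (hL.comm m j), dm_comm (D m) (D i) _ (hL.comm m i),
    dm_comm (D i) (D j) _ (hL.comm i j)]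
  noncomm_ring

omit hL in
lemma curv_swap (i j : Fin n) : curv D Γ i j = -curv D Γ j i := by
  simp only [curv]; abel

/-- `ric` is the trace of `curv` over its first form index and its upper fibre index. -/
lemma ric_eq (j k : Fin n) : ric D Γ j k = ∑ i, curv D Γ i k i j := by
  simp only [ric, Matrix.of_apply, curv, Matrix.add_apply, Matrix.sub_apply, dm_apply,
    Matrix.mul_apply, Finset.sum_add_distrib, Finset.sum_sub_distrib, map_sum]
  congr 1
  · congr 1
    · congr 1
      · exact Finset.sum_congr rfl fun i _ => by rw [hL.torsion]
      · exact Finset.sum_congr rfl fun i _ => by rw [hL.torsion]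
    · rw [Finset.sum_comm]
      refine Finset.sum_congr rfl fun i _ => Finset.sum_congr rfl fun l _ => ?_
      rw [hL.torsion j k l, hL.torsion l i i, mul_comm]
  · refine Finset.sum_congr rfl fun i _ => Finset.sum_congr rfl fun l _ => ?_
    rw [hL.torsion j i l, hL.torsion l k i, mul_comm]

omit hL in
lemma eq_zero_of_add_self {x : A} (h : x + x = 0) : x = 0 := by
  have : x = (1 / 2 : ℝ) • (x + x) := by
    rw [smul_add, ← add_smul]; norm_num
  rw [this, h, smul_zero]

lemma Q_anti (i j k l : Fin n) :
    (curv D Γ i j * H) k l = -(curv D Γ i j * H) l k := by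
  have := congrFun (congrFun (hL.curv_anti i j) l) k
  simpa using this

omit hL in
lemma Q_swap (i j k l : Fin n) :
    (curv D Γ i j * H) k l = -(curv D Γ j i * H) k l := by
  rw [curv_swap i j]; simp

lemma Q_contract (j l : Fin n) :
    ∑ k, (curv D Γ k j * H) k l = (H * ric D Γ) l j := by
  simp only [Matrix.mul_apply]
  rw [Finset.sum_comm]
  refine Finset.sum_congr rfl fun p _ => ?_
  rw [hL.ric_eq, hL.Hs l p, Finset.mul_sum]
  exact Finset.sum_congr rfl fun k _ => mul_comm _ _

lemma Q_contract₂ (j l : Fin n) :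
    ∑ k, (curv D Γ k j * H) l k = -(H * ric D Γ) l j := by
  rw [← hL.Q_contract, ← Finset.sum_neg_distrib]
  exact Finset.sum_congr rfl fun k _ => hL.Q_anti _ _ _ _

lemma Q_contract₃ (j l : Fin n) :
    ∑ k, (curv D Γ j k * H) k l = -(H * ric D Γ) l j := by
  rw [← hL.Q_contract, ← Finset.sum_neg_distrib]
  exact Finset.sum_congr rfl fun k _ => Q_swap _ _ _ _

lemma Q_contract₄ (j l : Fin n) :
    ∑ k, (curv D Γ j k * H) l k = (H * ric D Γ) l j := by
  rw [← neg_neg ((H * ric D Γ) l j), ← hL.Q_contract₂, ← Finset.sum_neg_distrib]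
  exact Finset.sum_congr rfl fun k _ => Q_swap _ _ _ _

/-- The curvature with raised second fibre index is antisymmetric in its fibre indices, so its
contraction against the symmetric lower indices of `Γ` vanishes. -/
lemma Q_torsion (a b j : Fin n) :
    ∑ i, ∑ p, Γ i j p * (curv D Γ a b * H) i p = 0 := by
  apply eq_zero_of_add_self
  nth_rewrite 2 [Finset.sum_comm]
  simp only [← Finset.sum_add_distrib]
  refine Finset.sum_eq_zero fun i _ => Finset.sum_eq_zero fun p _ => ?_
  rw [hL.Q_anti a b p i, hL.torsion p i j]
  ring

/-- The contracted second Bianchi identity `∂_m R = 2 ∇_i R^i_m`. -/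
lemma contracted_bianchi (m : Fin n) :
    D m (trace (H * ric D Γ)) = 2 * (∑ i, D i ((H * ric D Γ) i m)
      + ∑ i, ∑ p, Γ i i p * (H * ric D Γ) p m
      - ∑ i, ∑ p, Γ m i p * (H * ric D Γ) p i) := by
  -- the second Bianchi identity, contracted over both pairs of indices
  have h : ∑ i, ∑ j, ((dm (D m) (curv D Γ i j * H) + Γ m * (curv D Γ i j * H)
        + curv D Γ i j * H * (Γ m)ᵀ) +
      (dm (D i) (curv D Γ j m * H) + Γ i * (curv D Γ j m * H) + curv D Γ j m * H * (Γ i)ᵀ) +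
      (dm (D j) (curv D Γ m i * H) + Γ j * (curv D Γ m i * H) + curv D Γ m i * H * (Γ j)ᵀ)) i j
      = 0 := by
    simp only [hL.bianchi]; simp
  simp only [Matrix.add_apply, dm_apply, Finset.sum_add_distrib] at h
  have a1 : ∑ i, ∑ j, D m ((curv D Γ i j * H) i j) = D m (trace (H * ric D Γ)) := by
    rw [Finset.sum_comm]
    simp only [← map_sum, hL.Q_contract, trace, diag]
  have a2 : ∑ i, ∑ j, (Γ m * (curv D Γ i j * H)) i j
      = ∑ i, ∑ p, Γ m i p * (H * ric D Γ) p i := by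
    refine Finset.sum_congr rfl fun i _ => ?_
    simp only [Matrix.mul_apply (M := Γ m)]
    rw [Finset.sum_comm]
    simp only [← Finset.mul_sum, hL.Q_contract₄]
  have a3 : ∑ i, ∑ j, (curv D Γ i j * H * (Γ m)ᵀ) i j
      = ∑ i, ∑ p, Γ m i p * (H * ric D Γ) p i := by
    rw [Finset.sum_comm]
    refine Finset.sum_congr rfl fun j _ => ?_
    simp only [Matrix.mul_apply (N := (Γ m)ᵀ), transpose_apply]
    rw [Finset.sum_comm]
    simp only [← Finset.sum_mul, hL.Q_contract]
    exact Finset.sum_congr rfl fun p _ => mul_comm _ _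
  have b1 : ∑ i, ∑ j, D i ((curv D Γ j m * H) i j) = -∑ i, D i ((H * ric D Γ) i m) := by
    simp only [← map_sum, hL.Q_contract₂, map_neg, Finset.sum_neg_distrib]
  have b2 : ∑ i, ∑ j, (Γ i * (curv D Γ j m * H)) i j
      = -∑ i, ∑ p, Γ i i p * (H * ric D Γ) p m := by
    rw [← Finset.sum_neg_distrib]
    refine Finset.sum_congr rfl fun i _ => ?_
    simp only [Matrix.mul_apply (M := Γ i)]
    rw [Finset.sum_comm]
    simp only [← Finset.mul_sum, hL.Q_contract₂, mul_neg, Finset.sum_neg_distrib]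
  have b3 : ∑ i, ∑ j, (curv D Γ j m * H * (Γ i)ᵀ) i j = 0 := by
    rw [Finset.sum_comm]
    refine Finset.sum_eq_zero fun j _ => ?_
    rw [← hL.Q_torsion j m j]
    simp only [Matrix.mul_apply (N := (Γ _)ᵀ), transpose_apply, mul_comm]
  have c1 : ∑ i, ∑ j, D j ((curv D Γ m i * H) i j) = -∑ i, D i ((H * ric D Γ) i m) := by
    rw [Finset.sum_comm]
    simp only [← map_sum, hL.Q_contract₃, map_neg, Finset.sum_neg_distrib]
  have c2 : ∑ i, ∑ j, (Γ j * (curv D Γ m i * H)) i j = 0 := by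
    refine Finset.sum_eq_zero fun i _ => ?_
    rw [← neg_eq_zero, ← hL.Q_torsion m i i, ← Finset.sum_neg_distrib]
    refine Finset.sum_congr rfl fun j _ => ?_
    simp only [Matrix.mul_apply (M := Γ _), ← Finset.sum_neg_distrib]
    exact Finset.sum_congr rfl fun p _ => by rw [hL.Q_anti m i p j]; ring
  have c3 : ∑ i, ∑ j, (curv D Γ m i * H * (Γ j)ᵀ) i j
      = -∑ i, ∑ p, Γ i i p * (H * ric D Γ) p m := by
    rw [Finset.sum_comm, ← Finset.sum_neg_distrib]
    refine Finset.sum_congr rfl fun j _ => ?_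
    simp only [Matrix.mul_apply (N := (Γ _)ᵀ), transpose_apply]
    rw [Finset.sum_comm]
    simp only [← Finset.sum_mul, hL.Q_contract₃, neg_mul, Finset.sum_neg_distrib]
    exact congrArg _ (Finset.sum_congr rfl fun p _ => mul_comm _ _)
  rw [a1, a2, a3, b1, b2, b3, c1, c2, c3] at h
  linear_combination h

end LeviCivita

/-! ### Identities along the reverse Ricci flow -/

omit [Algebra ℝ A] in
lemma sum_rotate (f : Fin n → Fin n → Fin n → A) :
    ∑ a, ∑ b, ∑ c, f a b c = ∑ b, ∑ c, ∑ a, f a b c := by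
  rw [Finset.sum_comm]
  exact Finset.sum_congr rfl fun _ _ => Finset.sum_comm

omit [Algebra ℝ A] in
lemma sum_rotate' (f : Fin n → Fin n → Fin n → A) :
    ∑ a, ∑ b, ∑ c, f a b c = ∑ c, ∑ a, ∑ b, f a b c :=
  (sum_rotate fun c a b => f a b c).symm

/-- A Levi-Civita structure evolving by the reverse Ricci flow, `T` playing the role of `∂_τ`. -/
structure ReverseRicciFlow (D : Fin n → Derivation ℝ A A) (T : Derivation ℝ A A)
    (G H : Matrix (Fin n) (Fin n) A) (Γ : Fin n → Matrix (Fin n) (Fin n) A) : Prop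
    extends LeviCivita D G H Γ where
  commT : ∀ i f, T (D i f) = D i (T f)
  flow : dm T G = ric D Γ + ric D Γ

namespace ReverseRicciFlow

variable {T : Derivation ℝ A A} (hF : ReverseRicciFlow D T G H Γ)
include hF

/-- Along the flow the Ricci tensor inherits its symmetry from `∂_τ g`. -/
lemma ric_symm (j k : Fin n) : ric D Γ j k = ric D Γ k j := by
  have h : dm T Gᵀ = dm T G := by rw [hF.symm]
  rw [dm_transpose, hF.flow] at h
  have h2 := congrFun (congrFun h j) k
  simp only [transpose_apply, Matrix.add_apply] at h2
  rw [← sub_eq_zero]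
  apply LeviCivita.eq_zero_of_add_self
  linear_combination -h2

/-- `∂_τ Γ^k_{ik} = ∂_i R`, since `2 Γ^k_{ik} = ∂_i log det g` and `∂_τ log det g = 2 R`. -/
lemma T_trace (i : Fin n) : T (∑ k, Γ i k k) = D i (trace (H * ric D Γ)) := by
  have hΓ : trace (H * dm (D i) G) = trace (Γ i) + trace (Γ i) := by
    rw [hF.compat, mul_add, trace_add, trace_mul_comm, mul_assoc, hF.inv, mul_one,
      trace_transpose, ← mul_assoc, hF.inv', one_mul]
  have hS : trace (H * dm T G) = trace (H * ric D Γ) + trace (H * ric D Γ) := by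
    rw [hF.flow, mul_add, trace_add]
  have h1 : T (trace (H * dm (D i) G)) = D i (trace (H * dm T G)) := by
    rw [d_trace, d_trace, dm_mul, dm_mul, trace_add, trace_add, hF.dm_inv, hF.dm_inv,
      dm_comm T (D i) G (hF.commT i)]
    congr 1
    simp only [neg_mul, trace_neg, neg_inj]
    rw [mul_assoc, trace_mul_comm]
    simp only [mul_assoc]
  rw [hΓ, hS, map_add, map_add] at h1
  rw [← sub_eq_zero]
  apply LeviCivita.eq_zero_of_add_self
  change T (trace (Γ i)) - _ + (T (trace (Γ i)) - _) = 0
  linear_combination h1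

/-- The contracted Bianchi identity with lowered indices; the matrix in parentheses is `∇_i Ric`. -/
lemma bianchi_low (m : Fin n) :
    D m (trace (H * ric D Γ)) = 2 * ∑ i, (H * (dm (D i) (ric D Γ) - (Γ i)ᵀ * ric D Γ
      - ric D Γ * Γ i)) i m := by
  have h : ∀ i, H * (dm (D i) (ric D Γ) - (Γ i)ᵀ * ric D Γ - ric D Γ * Γ i)
      = dm (D i) (H * ric D Γ) + Γ i * (H * ric D Γ) - H * ric D Γ * Γ i := by
    intro i
    rw [dm_mul, hF.compat_inv]
    noncomm_ring
  rw [hF.contracted_bianchi]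
  simp only [h, Matrix.add_apply, Matrix.sub_apply, Finset.sum_add_distrib,
    Finset.sum_sub_distrib, dm_apply]
  congr 2
  simp only [Matrix.mul_apply (M := H * ric D Γ)]
  rw [Finset.sum_comm]
  refine Finset.sum_congr rfl fun p _ => Finset.sum_congr rfl fun i _ => ?_
  rw [hF.torsion, mul_comm]

/-- `g^{jk} ∂_τ Γ^i_{jk} = 0`, by the contracted Bianchi identity. -/
lemma T_harmonic (i : Fin n) : ∑ j, ∑ k, H j k * T (Γ j i k) = 0 := by
  -- differentiating metric compatibility in time gives `2 ∇_j Ric` in terms of `∂_τ Γ_j`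
  have hB : ∀ j, (dm (D j) (ric D Γ) - (Γ j)ᵀ * ric D Γ - ric D Γ * Γ j)
      + (dm (D j) (ric D Γ) - (Γ j)ᵀ * ric D Γ - ric D Γ * Γ j)
      = (dm T (Γ j))ᵀ * G + G * dm T (Γ j) := by
    intro j
    have h := dm_comm T (D j) G (hF.commT j)
    rw [hF.compat, hF.flow, dm_add, dm_mul, dm_mul, hF.flow, dm_add, dm_transpose] at h
    have : dm (D j) (ric D Γ) + dm (D j) (ric D Γ) - ((dm T (Γ j))ᵀ * G +
      (Γ j)ᵀ * (ric D Γ + ric D Γ) + ((ric D Γ + ric D Γ) * Γ j + G * dm T (Γ j))) = 0 := by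
      rw [h, sub_self]
    rw [← sub_eq_zero, ← this]
    noncomm_ring
  set U : Fin n → A := fun i => ∑ j, ∑ k, H j k * T (Γ j i k) with hU
  have hUG : ∀ l, ∑ q, U q * G q l = 0 := by
    intro l
    have h1 := hF.bianchi_low l
    rw [two_mul, ← Finset.sum_add_distrib] at h1
    simp only [← Matrix.add_apply, ← mul_add, hB] at h1
    simp only [mul_add, ← mul_assoc, hF.inv', one_mul, Matrix.add_apply,
      Finset.sum_add_distrib] at h1
    have h2 : ∑ j, dm T (Γ j) j l = D l (trace (H * ric D Γ)) := by
      rw [← hF.T_trace, map_sum]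
      exact Finset.sum_congr rfl fun j _ => by rw [dm_apply, hF.torsion]
    have h3 : ∑ j, (H * (dm T (Γ j))ᵀ * G) j l = ∑ q, U q * G q l := by
      simp only [Matrix.mul_apply (N := G)]
      rw [Finset.sum_comm]
      refine Finset.sum_congr rfl fun q _ => ?_
      rw [← Finset.sum_mul]
      simp only [Matrix.mul_apply, transpose_apply, dm_apply, hU]
    rw [h2, h3] at h1
    linear_combination -h1
  have h : U ᵥ* G = 0 := funext hUG
  have h' : U ᵥ* (G * H) = 0 := by rw [← vecMul_vecMul, h, zero_vecMul]
  rw [hF.inv, vecMul_one] at h'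
  exact congrFun h' i

/-- Evolution of the scalar curvature, `∂_τ R = -Δ R - 2 |Ric|²`; the Laplacian is written as
the divergence of the gradient. -/
lemma T_scal :
    T (trace (H * ric D Γ)) + 2 * ∑ k, ∑ l, (H * ric D Γ) k l * (H * ric D Γ) l k
      + ∑ k, D k (∑ l, H k l * D l (trace (H * ric D Γ)))
      + ∑ k, ∑ l, (∑ m, H k m * D m (trace (H * ric D Γ))) * Γ k l l = 0 := by
  set S := trace (H * ric D Γ) with hS
  have e1 : T S = -(2 * ∑ k, ∑ l, (H * ric D Γ) k l * (H * ric D Γ) l k)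
      + ∑ j, ∑ k, H j k * T (ric D Γ j k) := by
    rw [hS, d_trace, dm_mul, trace_add, hF.dm_inv, hF.flow]
    congr 1
    · have : -(H * (ric D Γ + ric D Γ) * H) * ric D Γ
          = -((H * ric D Γ) * (H * ric D Γ) + (H * ric D Γ) * (H * ric D Γ)) := by
        noncomm_ring
      rw [this, trace_neg, trace_add, two_mul]
      simp only [trace, diag, Matrix.mul_apply (M := H * ric D Γ)]
    · simp only [trace, diag, Matrix.mul_apply, dm_apply]
      exact Finset.sum_congr rfl fun j _ => Finset.sum_congr rfl fun k _ => by
        rw [hF.ric_symm]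
  have hC : ∀ i, ∑ l, T (Γ i l l) = D i S := fun i => by rw [← map_sum, hF.T_trace]
  -- `∂_τ Ric` from the coordinate formula, with `∂_τ Γ^i_{ji} = ∂_j R` inserted
  have e2 : ∀ j k, T (ric D Γ j k) = (∑ i, D i (T (Γ j i k))) - D k (D j S)
      + (∑ i, T (Γ j i k) * ∑ l, Γ i l l) + (∑ i, Γ j i k * D i S)
      - (∑ i, ∑ l, T (Γ j l i) * Γ l i k) - ∑ i, ∑ l, Γ j l i * T (Γ l i k) := by
    intro j k
    have hr : ric D Γ j k = (∑ i, D i (Γ j i k)) - D k (∑ i, Γ j i i)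
      + (∑ i, ∑ l, Γ j i k * Γ i l l) - ∑ i, ∑ l, Γ j l i * Γ l i k := rfl
    rw [hr, map_sub, map_add, map_sub, hF.commT, hF.T_trace, ← hS]
    simp only [map_sum, hF.commT, Derivation.leibniz, smul_eq_mul, Finset.sum_add_distrib,
      ← hC, Finset.mul_sum]
    simp only [mul_comm (T _)]
    ring
  have hHD : ∀ j, ∑ k, H j k * D k (D j S) = ∑ k, H j k * D j (D k S) :=
    fun j => Finset.sum_congr rfl fun k _ => by rw [hF.comm]
  -- differentiating `T_harmonic` moves the derivative of `∂_τ Γ` onto `H`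
  have e3 : ∑ j, ∑ k, H j k * ∑ i, D i (T (Γ j i k))
      = (∑ j, ∑ k, H j k * ∑ i, ∑ l, T (Γ j l i) * Γ l i k)
        + ∑ j, ∑ k, H j k * ∑ i, ∑ l, Γ j l i * T (Γ l i k) := by
    have h : ∑ i, D i (∑ j, ∑ k, H j k * T (Γ j i k)) = 0 := by
      simp only [hF.T_harmonic, map_zero, Finset.sum_const_zero]
    simp only [map_sum, Derivation.leibniz, smul_eq_mul, Finset.sum_add_distrib,
      hF.compat_inv_apply, mul_sub, mul_neg, Finset.sum_sub_distrib, Finset.sum_neg_distrib,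
      Finset.mul_sum] at h
    have x0 : ∑ j, ∑ k, H j k * ∑ i, D i (T (Γ j i k))
        = ∑ i, ∑ j, ∑ k, H j k * D i (T (Γ j i k)) := by
      simp only [Finset.mul_sum]
      exact (sum_rotate _).symm
    have x1 : ∑ i, ∑ j, ∑ k, ∑ p, T (Γ j i k) * (Γ i j p * H p k)
        = ∑ j, ∑ k, H j k * ∑ i, ∑ l, Γ j l i * T (Γ l i k) := by
      simp only [Finset.mul_sum]
      calc _ = ∑ p, ∑ k, ∑ i, ∑ j, T (Γ j i k) * (Γ i j p * H p k) := by
            refine (Finset.sum_congr rfl fun i _ => ?_).trans (sum_rotate _)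
            rw [sum_rotate']
            exact Finset.sum_congr rfl fun p _ => Finset.sum_comm
        _ = _ := by
            refine Finset.sum_congr rfl fun p _ => Finset.sum_congr rfl fun k _ =>
              Finset.sum_congr rfl fun i _ => Finset.sum_congr rfl fun j _ => ?_
            rw [hF.torsion i p j]
            ring
    have x2 : ∑ i, ∑ j, ∑ k, ∑ p, T (Γ j i k) * (H j p * Γ i k p)
        = ∑ j, ∑ k, H j k * ∑ i, ∑ l, T (Γ j l i) * Γ l i k := by
      simp only [Finset.mul_sum]
      rw [Finset.sum_comm]
      refine Finset.sum_congr rfl fun j _ => ?_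
      rw [← sum_rotate]
      refine Finset.sum_congr rfl fun i _ => ?_
      rw [Finset.sum_comm]
      refine Finset.sum_congr rfl fun p _ => Finset.sum_congr rfl fun k _ => ?_
      ring
    rw [x0, ← x1, ← x2]
    linear_combination h
  have e4 : ∑ j, ∑ k, H j k * ∑ i, T (Γ j i k) * ∑ l, Γ i l l = 0 := by
    have h : ∀ j k, H j k * ∑ i, T (Γ j i k) * ∑ l, Γ i l l
        = ∑ i, H j k * T (Γ j i k) * ∑ l, Γ i l l := fun j k => by
      rw [Finset.mul_sum]
      exact Finset.sum_congr rfl fun i _ => (mul_assoc _ _ _).symm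
    simp only [h]
    rw [sum_rotate']
    simp only [← Finset.sum_mul, hF.T_harmonic, zero_mul, Finset.sum_const_zero]
  have e5 : ∑ k, D k (∑ l, H k l * D l S) + ∑ k, ∑ l, (∑ m, H k m * D m S) * Γ k l l
      = ∑ j, ∑ k, H j k * D j (D k S) - ∑ j, ∑ k, H j k * ∑ i, Γ j i k * D i S := by
    simp only [map_sum, Derivation.leibniz, smul_eq_mul, Finset.sum_add_distrib,
      hF.compat_inv_apply, mul_sub, mul_neg, Finset.sum_sub_distrib, Finset.sum_neg_distrib,
      Finset.mul_sum, Finset.sum_mul]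
    have y1 : ∑ k, ∑ l, ∑ p, D l S * (Γ k k p * H p l)
        = ∑ k, ∑ l, ∑ m, H k m * D m S * Γ k l l := by
      rw [sum_rotate']
      refine Finset.sum_congr rfl fun p _ => Finset.sum_congr rfl fun k _ =>
        Finset.sum_congr rfl fun l _ => ?_
      rw [hF.torsion k p k]
      ring
    have y2 : ∑ k, ∑ l, ∑ p, D l S * (H k p * Γ k l p)
        = ∑ j, ∑ k, ∑ i, H j k * (Γ j i k * D i S) := by
      refine Finset.sum_congr rfl fun k _ => ?_
      rw [Finset.sum_comm]
      refine Finset.sum_congr rfl fun p _ => Finset.sum_congr rfl fun l _ => ?_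
      ring
    rw [y1, y2]
    ring
  rw [e1]
  simp only [e2, mul_sub, mul_add, Finset.sum_sub_distrib, Finset.sum_add_distrib, hHD]
  linear_combination e5 + e3 + e4

end ReverseRicciFlow

variable (A) in
/-- The constant `1/2`. -/
def half : A := algebraMap ℝ A (1 / 2)

lemma half_add : half A + half A = 1 := by
  rw [half, ← map_add, ← map_one (algebraMap ℝ A)]
  norm_num

lemma d_half_mul (d : Derivation ℝ A A) (x : A) : d (half A * x) = half A * d x := by
  rw [half, ← Algebra.smul_def, d.map_smul, Algebra.smul_def]

/-- The Christoffel symbols `Γ^k_{ij}` of `G`, stored as `christoffel i k j`. -/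
def christoffel (D : Fin n → Derivation ℝ A A) (G H : Matrix (Fin n) (Fin n) A) (i : Fin n) :
    Matrix (Fin n) (Fin n) A := Matrix.of fun k j =>
  half A * ∑ l, H k l * (D i (G j l) + D j (G i l) - D l (G i j))

lemma leviCivita_christoffel (hc : ∀ i j f, D i (D j f) = D j (D i f)) (hG : Gᵀ = G)
    (hGH : G * H = 1) : LeviCivita D G H (christoffel D G H) where
  comm := hc
  symm := hG
  inv := hGH
  torsion i j k := by
    have hs : ∀ i j, G i j = G j i := fun i j => congrFun (congrFun hG j) i
    simp only [christoffel, Matrix.of_apply]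
    congr 1
    refine Finset.sum_congr rfl fun l _ => ?_
    rw [hs i j]; ring
  compat i := by
    have hs : ∀ i j, G i j = G j i := fun i j => congrFun (congrFun hG j) i
    -- the Christoffel symbols with lowered upper index
    have low : ∀ k l, (G * christoffel D G H i) l k
        = half A * (D i (G k l) + D k (G i l) - D l (G i k)) := by
      intro k l
      set w : Fin n → A := fun l => half A * (D i (G k l) + D k (G i l) - D l (G i k)) with hw
      have h1 : (G *ᵥ (H *ᵥ w)) l = w l := by
        rw [mulVec_mulVec, hGH, one_mulVec]
      change _ = w l
      rw [← h1]
      simp only [Matrix.mul_apply, mulVec, dotProduct, christoffel, Matrix.of_apply, hw]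
      refine Finset.sum_congr rfl fun p _ => ?_
      rw [Finset.mul_sum]
      congr 1
      refine Finset.sum_congr rfl fun q _ => ?_
      ring
    have e : (christoffel D G H i)ᵀ * G = (G * christoffel D G H i)ᵀ := by
      rw [transpose_mul, hG]
    ext k l
    rw [e, Matrix.add_apply, transpose_apply, low, low, dm_apply, hs l k, hs i l, hs i k]
    linear_combination (-D i (G k l)) * half_add (A := A)

/-! ### Expansion of the space-time Ricci tensor -/

variable (D) in
/-- The coordinate derivations on space-time, `0` being the time direction. -/
def stD (T : Derivation ℝ A A) (a : Fin (n + 1)) : Derivation ℝ A A :=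
  Fin.cases T D a

variable (D H Γ) in
/-- The Christoffel symbols `Γ̄^k_{ab}` of the space-time metric with upper index spatial. They do
not depend on `N`. -/
def connS (k : Fin n) (a b : Fin (n + 1)) : A :=
  Fin.cases
    (Fin.cases (-(half A * ∑ l, H k l * D l (trace (H * ric D Γ))))
      (fun j => (H * ric D Γ) k j) b)
    (fun i => Fin.cases ((H * ric D Γ) k i) (fun j => Γ i k j) b) a

variable (D H Γ) in
/-- The numerators of the Christoffel symbols with upper index `0`:
`Γ̄^0_{ab} = (N + R)⁻¹ * connT a b`. -/
def connT (T : Derivation ℝ A A) (a b : Fin (n + 1)) : A :=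
  Fin.cases
    (Fin.cases (half A * T (trace (H * ric D Γ)))
      (fun j => half A * D j (trace (H * ric D Γ))) b)
    (fun i => Fin.cases (half A * D i (trace (H * ric D Γ))) (fun j => -ric D Γ i j) b) a

variable (D H Γ) in
/-- All Christoffel symbols `Γ̄^c_{ab}` of the space-time metric, where `u = (N + R)⁻¹`. -/
def conn (T : Derivation ℝ A A) (u : A) (c a b : Fin (n + 1)) : A :=
  Fin.cases (u * connT D H Γ T a b) (fun k => connS D H Γ k a b) c

/-- The Ricci tensor of a connection on space-time with Christoffel symbols `B c a b = B^c_{ab}`. -/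
def stRic (D : Fin n → Derivation ℝ A A) (T : Derivation ℝ A A)
    (B : Fin (n + 1) → Fin (n + 1) → Fin (n + 1) → A) (a b : Fin (n + 1)) : A :=
  (∑ c, stD D T c (B c a b)) - stD D T b (∑ c, B c a c)
    + (∑ c, ∑ d, B c a b * B d c d) - ∑ c, ∑ d, B d a c * B c b d

variable (D H Γ) in
/-- The limit `N → ∞` of `Ric(ḡ) + Hess(-Nτ)`. -/
def leading (T : Derivation ℝ A A) (a b : Fin (n + 1)) : A :=
  (∑ k, D k (connS D H Γ k a b)) - stD D T b (∑ k, connS D H Γ k a k.succ)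
    + (∑ k, ∑ l, connS D H Γ k a b * connS D H Γ l k.succ l.succ)
    - (∑ k, ∑ l, connS D H Γ l a k.succ * connS D H Γ k b l.succ) + connT D H Γ T a b

variable (D H Γ) in
/-- The coefficient of `u = (N + R)⁻¹` in `Ric(ḡ) + Hess(-Nτ)`. -/
def coeff₁ (T : Derivation ℝ A A) (a b : Fin (n + 1)) : A :=
  T (connT D H Γ T a b) - stD D T b (connT D H Γ T a 0)
    + (∑ k, connS D H Γ k a b * connT D H Γ T k.succ 0)
    + connT D H Γ T a b * (∑ l, connS D H Γ l 0 l.succ)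
    - (∑ k, connT D H Γ T a k.succ * connS D H Γ k b 0)
    - (∑ l, connS D H Γ l a 0 * connT D H Γ T b l.succ)
    - trace (H * ric D Γ) * connT D H Γ T a b

variable (D H Γ) in
/-- The coefficient of `u² = (N + R)⁻²` in `Ric(ḡ) + Hess(-Nτ)`. -/
def coeff₂ (T : Derivation ℝ A A) (a b : Fin (n + 1)) : A :=
  -(connT D H Γ T a b * T (trace (H * ric D Γ)))
    + connT D H Γ T a 0 * stD D T b (trace (H * ric D Γ))
    + connT D H Γ T a b * connT D H Γ T 0 0 - connT D H Γ T a 0 * connT D H Γ T b 0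

/-- Expansion of `Ric(ḡ) + Hess(-Nτ)` in powers of `u = (N + R)⁻¹`; here `c` is the constant `N`
and `N Γ̄^0_{ab}` is the Hessian of `-Nτ`. -/
lemma stRic_expansion (T : Derivation ℝ A A) (c : ℝ) (u : A)
    (hu : u * (algebraMap ℝ A c + trace (H * ric D Γ)) = 1) (a b : Fin (n + 1)) :
    stRic D T (conn D H Γ T u) a b + algebraMap ℝ A c * conn D H Γ T u 0 a b
      = leading D H Γ T a b + u * coeff₁ D H Γ T a b + u ^ 2 * coeff₂ D H Γ T a b := by
  have hdu : ∀ d : Derivation ℝ A A, d u = -(u ^ 2 * d (trace (H * ric D Γ))) := by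
    intro d
    have h := congrArg d hu
    rw [d.leibniz, map_add, d.map_algebraMap, d.map_one_eq_zero, smul_eq_mul, smul_eq_mul] at h
    linear_combination u * h - d u * hu
  have h0 : ∀ a b, conn D H Γ T u 0 a b = u * connT D H Γ T a b := fun _ _ => rfl
  have hs : ∀ k a b, conn D H Γ T u (Fin.succ k) a b = connS D H Γ k a b := fun _ _ _ => rfl
  have hT : stD D T 0 = T := rfl
  have hD : ∀ k, stD D T (Fin.succ k) = D k := fun _ => rfl
  simp only [stRic, Fin.sum_univ_succ, h0, hs, hT, hD, map_add, Derivation.leibniz, smul_eq_mul,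
    hdu, leading, coeff₁, coeff₂, Finset.sum_add_distrib, Finset.mul_sum]
  have r1 : ∑ k, connS D H Γ k a b * (u * connT D H Γ T k.succ 0)
      = u * ∑ k, connS D H Γ k a b * connT D H Γ T k.succ 0 := by
    rw [Finset.mul_sum]; exact Finset.sum_congr rfl fun k _ => by ring
  have r2 : ∑ k, u * connT D H Γ T a k.succ * connS D H Γ k b 0
      = u * ∑ k, connT D H Γ T a k.succ * connS D H Γ k b 0 := by
    rw [Finset.mul_sum]; exact Finset.sum_congr rfl fun k _ => by ring
  have r3 : ∑ k, connS D H Γ k a 0 * (u * connT D H Γ T b k.succ)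
      = u * ∑ k, connS D H Γ k a 0 * connT D H Γ T b k.succ := by
    rw [Finset.mul_sum]; exact Finset.sum_congr rfl fun k _ => by ring
  have r4 : ∑ k, u * connT D H Γ T a b * connS D H Γ k 0 k.succ
      = u * ∑ k, connT D H Γ T a b * connS D H Γ k 0 k.succ := by
    rw [Finset.mul_sum]; exact Finset.sum_congr rfl fun k _ => by ring
  rw [r1, r2, r3, r4]
  linear_combination connT D H Γ T a b * hu

namespace ReverseRicciFlow

variable {T : Derivation ℝ A A} (hF : ReverseRicciFlow D T G H Γ)
include hF

/-- The spatial components of the leading term are `R_{ij} + connT i j`, and `connT i j = -R_{ij}`. -/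
lemma leading_space (i j : Fin n) : leading D H Γ T i.succ j.succ = 0 := by
  have h : leading D H Γ T i.succ j.succ = ric D Γ i j + -ric D Γ i j := by
    simp only [leading, ric, Matrix.of_apply, connS, connT, stD, Fin.cases_succ]
    congr 2
    refine Finset.sum_congr rfl fun k _ => Finset.sum_congr rfl fun l _ => ?_
    rw [hF.torsion j l k]
  rw [h, add_neg_cancel]

/-- The mixed components of the leading term vanish by the contracted Bianchi identity. -/
lemma leading_mixed (i : Fin n) : leading D H Γ T i.succ 0 = 0 := by
  have hb := hF.contracted_bianchi i
  have h : leading D H Γ T i.succ 0 = (∑ k, D k ((H * ric D Γ) k i))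
      - D i (trace (H * ric D Γ))
      + (∑ k, ∑ l, Γ k k l * (H * ric D Γ) l i)
      - (∑ k, ∑ l, Γ i k l * (H * ric D Γ) l k) + half A * D i (trace (H * ric D Γ)) := by
    simp only [leading, connS, connT, stD, Fin.cases_succ, Fin.cases_zero]
    rw [hF.T_trace]
    congr 2
    · congr 1
      rw [Finset.sum_comm]
      refine Finset.sum_congr rfl fun k _ => Finset.sum_congr rfl fun l _ => ?_
      rw [hF.torsion k l k, mul_comm]
    · rw [Finset.sum_comm]
  rw [h]
  linear_combination (-half A) * hb + (D i (trace (H * ric D Γ)) -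
    (∑ k, D k ((H * ric D Γ) k i)) - (∑ k, ∑ l, Γ k k l * (H * ric D Γ) l i)
      + (∑ k, ∑ l, Γ i k l * (H * ric D Γ) l k)) * half_add (A := A)

/-- The time component of the leading term vanishes by the evolution equation of `R`. -/
lemma leading_time : leading D H Γ T 0 0 = 0 := by
  have hs := hF.T_scal
  simp only [leading, connS, connT, stD, Fin.cases_succ, Fin.cases_zero, map_neg, d_half_mul,
    neg_mul, Finset.sum_neg_distrib, mul_assoc, ← Finset.mul_sum (a := half A) (s := Finset.univ)]
  have ht : ∑ k, (H * ric D Γ) k k = trace (H * ric D Γ) := rfl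
  have hc : ∑ k, ∑ l, (H * ric D Γ) l k * (H * ric D Γ) k l
      = ∑ k, ∑ l, (H * ric D Γ) k l * (H * ric D Γ) l k := Finset.sum_comm
  rw [ht, hc]
  linear_combination (-half A) * hs + (T (trace (H * ric D Γ)) +
    ∑ k, ∑ l, (H * ric D Γ) k l * (H * ric D Γ) l k) * half_add (A := A)

end ReverseRicciFlow
end Algebra

/-! ### The space-time metric -/

section SpaceTimeMetric

variable {A : Type*} [CommRing A] [Algebra ℝ A] {n : ℕ}
  {D : Fin n → Derivation ℝ A A} {G H : Matrix (Fin n) (Fin n) A}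

variable (D G H) in
/-- The space-time metric: `G` on the spatial block and `c + R` in the time direction. -/
def stG (c : ℝ) (a b : Fin (n + 1)) : A :=
  Fin.cases
    (Fin.cases (algebraMap ℝ A c + (H * ric D (christoffel D G H)).trace) (fun _ => 0) b)
    (fun i => Fin.cases 0 (fun j => G i j) b) a

variable (H) in
/-- The inverse of the space-time metric, where `u = (c + R)⁻¹`. -/
def stH (u : A) (a b : Fin (n + 1)) : A :=
  Fin.cases (Fin.cases u (fun _ => 0) b) (fun i => Fin.cases 0 (fun j => H i j) b) a

/-- The Christoffel symbols of the space-time metric are given by `conn`. -/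
lemma conn_eq {T : Derivation ℝ A A} (hF : ReverseRicciFlow D T G H (christoffel D G H))
    (c : ℝ) (u : A) (e a b : Fin (n + 1)) :
    half A * ∑ d, stH H u e d * (stD D T a (stG D G H c b d) + stD D T b (stG D G H c a d)
      - stD D T d (stG D G H c a b)) = conn D H (christoffel D G H) T u e a b := by
  have hT : ∀ i j, T (G i j) = ric D (christoffel D G H) i j + ric D (christoffel D G H) i j :=
    fun i j => congrFun (congrFun hF.flow i) j
  have hh := half_add (A := A)
  rw [Fin.sum_univ_succ]
  refine Fin.cases ?_ (fun k => ?_) e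
  · refine Fin.cases ?_ (fun i => ?_) a <;> refine Fin.cases ?_ (fun j => ?_) b <;>
      simp [stH, stG, stD, conn, connT, hT]
    · ring
    · ring
    · ring
    · linear_combination (-u * ric D (christoffel D G H) i j) * hh
  · have hP : ∀ j, half A * ∑ l, H k l * (ric D (christoffel D G H) j l
        + ric D (christoffel D G H) j l) = (H * ric D (christoffel D G H)) k j := by
      intro j
      rw [Matrix.mul_apply, Finset.mul_sum]
      refine Finset.sum_congr rfl fun l _ => ?_
      rw [hF.ric_symm l j]
      linear_combination (H k l * ric D (christoffel D G H) j l) * hh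
    refine Fin.cases ?_ (fun i => ?_) a <;> refine Fin.cases ?_ (fun j => ?_) b <;>
      simp [stH, stG, stD, conn, connS, hT]
    · exact hP j
    · exact hP i
    · rfl

end SpaceTimeMetric

/-! ### The algebra of smooth functions -/

section Analysis

variable {n : ℕ}

/-- The algebra of smooth functions on an open subset `W` of space-time, as functions on `W` which
are restrictions of functions on space-time smooth on `W`. -/
def smoothFn (W : TopologicalSpace.Opens (E n)) : Subalgebra ℝ (W → ℝ) where
  carrier := {f | ∃ F : E n → ℝ, ContDiffOn ℝ (⊤ : ℕ∞) F W ∧ ∀ p : W, F p = f p}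
  mul_mem' := by
    rintro f f' ⟨F, hF, h⟩ ⟨F', hF', h'⟩
    exact ⟨fun p => F p * F' p, hF.mul hF', fun p => by simp [h, h']⟩
  add_mem' := by
    rintro f f' ⟨F, hF, h⟩ ⟨F', hF', h'⟩
    exact ⟨fun p => F p + F' p, hF.add hF', fun p => by simp [h, h']⟩
  algebraMap_mem' c := ⟨fun _ => c, contDiffOn_const, fun _ => rfl⟩

variable {W : TopologicalSpace.Opens (E n)}

/-- `F` restricts to `f` on `W`. -/
def Rep (F : E n → ℝ) (f : smoothFn W) : Prop := ∀ p : W, F p = f.1 p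

/-- The element of `smoothFn W` given by a function smooth on `W`. -/
def ofFun (F : E n → ℝ) (hF : ContDiffOn ℝ (⊤ : ℕ∞) F W) : smoothFn W :=
  ⟨fun p => F p, F, hF, fun _ => rfl⟩

lemma rep_ofFun (F : E n → ℝ) (hF : ContDiffOn ℝ (⊤ : ℕ∞) F W) : Rep F (ofFun F hF) :=
  fun _ => rfl

lemma exists_rep (f : smoothFn W) : ∃ F : E n → ℝ, Rep F f := by
  obtain ⟨F, -, h⟩ := f.2
  exact ⟨F, h⟩

namespace Rep

variable {F F' : E n → ℝ} {f f' : smoothFn W}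

lemma eq (h : Rep F f) (h' : Rep F f') : f = f' :=
  Subtype.ext (funext fun p => (h p).symm.trans (h' p))

lemma contDiffOn (h : Rep F f) : ContDiffOn ℝ (⊤ : ℕ∞) F W := by
  obtain ⟨F', hF', h'⟩ := f.2
  exact hF'.congr fun p hp => (h ⟨p, hp⟩).trans (h' ⟨p, hp⟩).symm

lemma contDiffAt (h : Rep F f) (p : W) : ContDiffAt ℝ (⊤ : ℕ∞) F p :=
  h.contDiffOn.contDiffAt (W.isOpen.mem_nhds p.2)

lemma diffAt (h : Rep F f) (p : W) : DifferentiableAt ℝ F p :=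
  (h.contDiffAt p).differentiableAt (by simp)

lemma fderiv_eq (h : Rep F f) (h' : Rep F' f) (p : W) : fderiv ℝ F p = fderiv ℝ F' p := by
  apply Filter.EventuallyEq.fderiv_eq
  filter_upwards [W.isOpen.mem_nhds p.2] with q hq
  exact (h ⟨q, hq⟩).trans (h' ⟨q, hq⟩).symm

lemma add (h : Rep F f) (h' : Rep F' f') : Rep (fun p => F p + F' p) (f + f') :=
  fun p => congrArg₂ (· + ·) (h p) (h' p)

lemma sub (h : Rep F f) (h' : Rep F' f') : Rep (fun p => F p - F' p) (f - f') :=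
  fun p => congrArg₂ (· - ·) (h p) (h' p)

lemma mul (h : Rep F f) (h' : Rep F' f') : Rep (fun p => F p * F' p) (f * f') :=
  fun p => congrArg₂ (· * ·) (h p) (h' p)

lemma const (c : ℝ) : Rep (fun _ => c) (algebraMap ℝ (smoothFn W) c) := fun _ => rfl

lemma zero : Rep (fun _ => 0) (0 : smoothFn W) := fun _ => rfl

lemma sum {ι : Type*} [Fintype ι] {F : ι → E n → ℝ} {f : ι → smoothFn W}
    (h : ∀ i, Rep (F i) (f i)) : Rep (fun p => ∑ i, F i p) (∑ i, f i) := by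
  intro p
  rw [AddSubmonoidClass.coe_finsetSum, Finset.sum_apply]
  exact Finset.sum_congr rfl fun i _ => h i p

lemma inv (h : Rep F f) (h0 : ∀ p ∈ W, F p ≠ 0) :
    ∃ u : smoothFn W, Rep (fun p => (F p)⁻¹) u ∧ u * f = 1 := by
  refine ⟨ofFun _ (h.contDiffOn.inv h0), rep_ofFun _ _, Subtype.ext (funext fun p => ?_)⟩
  change (F p)⁻¹ * f.1 p = 1
  rw [← h p, inv_mul_cancel₀ (h0 p p.2)]

end Rep

lemma derFun_mem (v : E n) (f : smoothFn W) :
    (fun p : W => fderiv ℝ (exists_rep f).choose p v) ∈ smoothFn W := by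
  refine ⟨fun p => fderiv ℝ (exists_rep f).choose p v, ?_, fun _ => rfl⟩
  have h := ((exists_rep f).choose_spec.contDiffOn.fderiv_of_isOpen W.isOpen
    (m := (⊤ : ℕ∞)) (by simp))
  exact h.clm_apply contDiffOn_const

/-- The directional derivative along `v`, as a function on the algebra of smooth functions. It is
computed with a chosen extension, on which it does not depend (`Rep.derFun`). -/
def derFun (v : E n) (f : smoothFn W) : smoothFn W :=
  ⟨fun p : W => fderiv ℝ (exists_rep f).choose p v, derFun_mem v f⟩

lemma Rep.derFun {F : E n → ℝ} {f : smoothFn W} (h : Rep F f) (v : E n) :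
    Rep (fun p => fderiv ℝ F p v) (derFun v f) := fun p => by
  change fderiv ℝ F p v = fderiv ℝ (exists_rep f).choose p v
  rw [h.fderiv_eq (exists_rep f).choose_spec p]

/-- The directional derivative along `v`, as a derivation. -/
def der (v : E n) : Derivation ℝ (smoothFn W) (smoothFn W) :=
  Derivation.mk'
    { toFun := derFun v
      map_add' := fun f f' => by
        obtain ⟨F, h⟩ := exists_rep f
        obtain ⟨F', h'⟩ := exists_rep f'
        refine Subtype.ext (funext fun p => ?_)
        refine ((h.add h').derFun v p).symm.trans (Eq.trans ?_ ((h.derFun v).add (h'.derFun v) p))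
        simp only
        rw [fderiv_fun_add (h.diffAt p) (h'.diffAt p)]
        rfl
      map_smul' := fun c f => by
        obtain ⟨F, h⟩ := exists_rep f
        have hc : Rep (fun p => c * F p) (c • f) := fun p => congrArg (c * ·) (h p)
        refine Subtype.ext (funext fun p => ?_)
        refine ((hc).derFun v p).symm.trans (Eq.trans ?_ (congrArg (c * ·) (h.derFun v p)))
        simp only
        rw [fderiv_const_mul (h.diffAt p)]
        rfl }
    (fun f f' => by
        obtain ⟨F, h⟩ := exists_rep f
        obtain ⟨F', h'⟩ := exists_rep f'
        refine Subtype.ext (funext fun p => ?_)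
        refine ((h.mul h').derFun v p).symm.trans
          (Eq.trans ?_ ((h.mul (h'.derFun v)).add (h'.mul (h.derFun v)) p))
        simp only
        rw [fderiv_fun_mul (h.diffAt p) (h'.diffAt p)]
        rfl)

lemma Rep.der {F : E n → ℝ} {f : smoothFn W} (h : Rep F f) (v : E n) :
    Rep (fun p => fderiv ℝ F p v) (der v f) := h.derFun v

/-- Symmetry of second derivatives. -/
lemma der_comm (v w : E n) (f : smoothFn W) : der v (der w f) = der w (der v f) := by
  obtain ⟨F, h⟩ := exists_rep f
  have key : ∀ (v w : E n) (p : W), ((der v (der w f)).1 p) = fderiv ℝ (fderiv ℝ F) p v w := by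
    intro v w p
    rw [← (h.der w).der v p]
    have hd : DifferentiableAt ℝ (fderiv ℝ F) p :=
      ((h.contDiffAt p).fderiv_right (m := 1) (by norm_cast)).differentiableAt (by simp)
    simp only
    rw [fderiv_clm_apply hd (differentiableAt_const _)]
    simp
  refine Subtype.ext (funext fun p => ?_)
  rw [key, key]
  exact ((h.contDiffAt p).isSymmSndFDerivAt (by
    rw [minSmoothness_of_isRCLikeNormedField]
    exact WithTop.coe_le_coe.mpr (le_top (a := (2 : ℕ∞))))) v w

variable (W) in
/-- The spatial coordinate derivations. -/
def dX (i : Fin n) : Derivation ℝ (smoothFn W) (smoothFn W) := der (Pi.single i 1, 0)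

variable (W) in
/-- The time derivation. -/
def dT : Derivation ℝ (smoothFn W) (smoothFn W) := der ((0 : Fin n → ℝ), (1 : ℝ))

lemma Rep.pdx {F : E n → ℝ} {f : smoothFn W} (h : Rep F f) (i : Fin n) :
    Rep (pdx i F) ((dX W) i f) := h.der _

lemma Rep.pdt {F : E n → ℝ} {f : smoothFn W} (h : Rep F f) : Rep (pdt F) ((dT W) f) := h.der _

lemma Rep.pd {F : E n → ℝ} {f : smoothFn W} (h : Rep F f) (a : Fin (n + 1)) :
    Rep (pd a F) (stD (dX W) (dT W) a f) := by
  refine Fin.cases ?_ (fun i => ?_) a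
  · exact h.der _
  · exact h.der _

/-! ### The coordinate tensors as elements of the algebra -/

section Metric

variable {g : E n → Matrix (Fin n) (Fin n) ℝ} {G H : Matrix (Fin n) (Fin n) (smoothFn W)}

/-- The inverse metric is smooth, by Cramer's rule. -/
lemma exists_inverse (hG : ∀ i j, Rep (fun p => g p i j) (G i j))
    (hdet : ∀ p ∈ W, (g p).det ≠ 0) :
    ∃ H : Matrix (Fin n) (Fin n) (smoothFn W),
      (∀ i j, Rep (fun p => ginv g p i j) (H i j)) ∧ G * H = 1 := by
  let ev : W → smoothFn W →+* ℝ := fun p => (Pi.evalRingHom _ p).comp (smoothFn W).val.toRingHom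
  have hev : ∀ p : W, (ev p).mapMatrix G = g p := fun p => by
    ext i j; exact (hG i j p).symm
  have hd : Rep (fun p => (g p).det) G.det := fun p => by
    have := (ev p).map_det G
    rw [hev] at this
    exact this.symm
  obtain ⟨u, hu, hu1⟩ := hd.inv hdet
  refine ⟨u • G.adjugate, fun i j p => ?_, ?_⟩
  · have h1 : (g p).adjugate i j = (G.adjugate i j).1 p := by
      have := (ev p).map_adjugate G
      rw [hev] at this
      exact (congrFun (congrFun this i) j).symm
    change (g p)⁻¹ i j = u.1 p * (G.adjugate i j).1 p
    rw [Matrix.inv_def, Ring.inverse_eq_inv', Matrix.smul_apply, smul_eq_mul, h1, ← hu p]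
  · rw [Matrix.mul_smul, Matrix.mul_adjugate, smul_smul, hu1, one_smul]

variable (hG : ∀ i j, Rep (fun p => g p i j) (G i j))
  (hH : ∀ i j, Rep (fun p => ginv g p i j) (H i j))
include hG hH

lemma rep_Chr (i j k : Fin n) : Rep (Chr g i j k) (christoffel (dX W) G H j i k) :=
  (Rep.const (1 / 2)).mul (Rep.sum fun l => (hH i l).mul
    ((((hG k l).pdx j).add ((hG j l).pdx k)).sub ((hG j k).pdx l)))

lemma rep_Ric (j k : Fin n) : Rep (Ric g j k) (ric (dX W) (christoffel (dX W) G H) j k) :=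
  (((Rep.sum fun i => (rep_Chr hG hH i j k).pdx i).sub
    ((Rep.sum fun i => rep_Chr hG hH i j i).pdx k)).add
    (Rep.sum fun i => Rep.sum fun l => (rep_Chr hG hH i j k).mul (rep_Chr hG hH l i l))).sub
    (Rep.sum fun i => Rep.sum fun l => (rep_Chr hG hH l j i).mul (rep_Chr hG hH i l k))

lemma reverseRicciFlow (hGH : G * H = 1) (hsymm : ∀ p ∈ W, (g p).IsSymm)
    (hflow : ∀ p ∈ W, ∀ j k : Fin n, pdt (fun q => g q j k) p = 2 * Ric g j k p) :
    ReverseRicciFlow (dX W) (dT W) G H (christoffel (dX W) G H) where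
  toLeviCivita := leviCivita_christoffel (fun _ _ _ => der_comm _ _ _)
    (by
      ext i j p
      exact (hG j i p).symm.trans (((hsymm p p.2).apply i j).trans (hG i j p))) hGH
  commT _ _ := der_comm _ _ _
  flow := by
    ext j k p
    have h1 := (hG j k).pdt p
    have h2 := rep_Ric hG hH j k p
    rw [hflow p p.2, h2, two_mul] at h1
    exact h1.symm

variable (hF : ReverseRicciFlow (dX W) (dT W) G H (christoffel (dX W) G H))
include hF

lemma rep_scal : Rep (scal g) (H * ric (dX W) (christoffel (dX W) G H)).trace := by
  have : (H * ric (dX W) (christoffel (dX W) G H)).trace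
      = ∑ j, ∑ k, H j k * ric (dX W) (christoffel (dX W) G H) j k := by
    simp only [Matrix.trace, Matrix.diag, Matrix.mul_apply]
    exact Finset.sum_congr rfl fun j _ => Finset.sum_congr rfl fun k _ => by
      rw [hF.ric_symm]
  rw [this]
  exact Rep.sum fun j => Rep.sum fun k => (hH j k).mul (rep_Ric hG hH j k)

lemma rep_barg (N : ℕ) (a b : Fin (n + 1)) : Rep (barg g N a b) (stG (dX W) G H (N : ℝ) a b) := by
  refine Fin.cases ?_ (fun i => ?_) a <;> refine Fin.cases ?_ (fun j => ?_) b
  · exact (Rep.const (N : ℝ)).add (rep_scal hG hH hF)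
  · exact Rep.zero
  · exact Rep.zero
  · exact hG i j

omit hG hF in
lemma rep_barginv (N : ℕ) {u : smoothFn W} (hu : Rep (fun p => ((N : ℝ) + scal g p)⁻¹) u)
    (a b : Fin (n + 1)) : Rep (barginv g N a b) (stH H u a b) := by
  refine Fin.cases ?_ (fun i => ?_) a <;> refine Fin.cases ?_ (fun j => ?_) b
  · exact hu
  · exact Rep.zero
  · exact Rep.zero
  · exact hH i j

lemma rep_barChr (N : ℕ) {u : smoothFn W} (hu : Rep (fun p => ((N : ℝ) + scal g p)⁻¹) u)
    (e a b : Fin (n + 1)) :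
    Rep (barChr g N e a b) (conn (dX W) H (christoffel (dX W) G H) (dT W) u e a b) := by
  rw [← conn_eq hF (N : ℝ)]
  exact (Rep.const (1 / 2)).mul (Rep.sum fun d => (rep_barginv hH N hu e d).mul
    ((((rep_barg hG hH hF N b d).pd a).add ((rep_barg hG hH hF N a d).pd b)).sub
      ((rep_barg hG hH hF N a b).pd d)))

lemma rep_barRic (N : ℕ) {u : smoothFn W} (hu : Rep (fun p => ((N : ℝ) + scal g p)⁻¹) u)
    (a b : Fin (n + 1)) :
    Rep (barRic g N a b) (stRic (dX W) (dT W) (conn (dX W) H (christoffel (dX W) G H) (dT W) u) a b) :=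
  have hC := rep_barChr hG hH hF N hu
  (((Rep.sum fun c => (hC c a b).pd c).sub ((Rep.sum fun c => hC c a c).pd b)).add
    (Rep.sum fun c => Rep.sum fun d => (hC c a b).mul (hC d c d))).sub
    (Rep.sum fun c => Rep.sum fun d => (hC d a c).mul (hC c b d))

omit hG hH hF in
/-- The Hessian of `-Nτ` is `N Γ̄^0_{ab}`. -/
lemma barHess_eq (N : ℕ) (a b : Fin (n + 1)) (p : E n) :
    barHess g N (fun q => -(N : ℝ) * q.2) a b p = N * barChr g N 0 a b p := by
  have h : ∀ (b : Fin (n + 1)) (q : E n),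
      pd b (fun q : E n => -(N : ℝ) * q.2) q = -(N : ℝ) * (dir b : E n).2 := by
    intro b q
    have h1 : HasFDerivAt (fun q : E n => -(N : ℝ) * q.2)
        (-(N : ℝ) • ContinuousLinearMap.snd ℝ (Fin n → ℝ) ℝ) q :=
      (hasFDerivAt_snd (𝕜 := ℝ) (E := Fin n → ℝ) (F := ℝ) (p := q)).const_mul _
    rw [pd, h1.fderiv]
    simp
  simp only [barHess, h]
  rw [Fin.sum_univ_succ]
  simp [pd, dir]

/-- The tensor `Ric(ḡ) + Hess(-Nτ)` as an expansion in `(N + R)⁻¹`. -/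
lemma bar_expansion (N : ℕ) {u : smoothFn W} (hu : Rep (fun p => ((N : ℝ) + scal g p)⁻¹) u)
    (hpos : ∀ p ∈ W, (N : ℝ) + scal g p ≠ 0) {a b : Fin (n + 1)}
    (h0 : leading (dX W) H (christoffel (dX W) G H) (dT W) a b = 0) (p : W) :
    barRic g N a b p + barHess g N (fun q => -(N : ℝ) * q.2) a b p
      = ((N : ℝ) + scal g p)⁻¹ * (coeff₁ (dX W) H (christoffel (dX W) G H) (dT W) a b).1 p
        + (((N : ℝ) + scal g p)⁻¹) ^ 2 * (coeff₂ (dX W) H (christoffel (dX W) G H) (dT W) a b).1 p := by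
  have hu1 : u * (algebraMap ℝ _ (N : ℝ) + (H * ric (dX W) (christoffel (dX W) G H)).trace) = 1 :=
    (hu.mul ((Rep.const (N : ℝ)).add (rep_scal hG hH hF))).eq
      (fun p => inv_mul_cancel₀ (hpos p p.2))
  have he := stRic_expansion (D := (dX W)) (H := H) (Γ := christoffel (dX W) G H) (dT W) (N : ℝ) u hu1 a b
  rw [h0, zero_add] at he
  have hp := congrFun (congrArg Subtype.val he) p
  rw [barHess_eq, rep_barRic hG hH hF N hu a b p, rep_barChr hG hH hF N hu 0 a b p]
  have hup : ((N : ℝ) + scal g p)⁻¹ = u.1 p := hu p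
  rw [hup]
  exact hp

end Metric

/-- A smooth function on `W` is bounded on compact subsets of `W`. -/
lemma exists_bound {K : Set (E n)} (hK : IsCompact K) (hKW : K ⊆ W) (f : smoothFn W) :
    ∃ M : ℝ, 0 ≤ M ∧ ∀ p : W, (p : E n) ∈ K → |f.1 p| ≤ M := by
  obtain ⟨F, h⟩ := exists_rep f
  obtain ⟨M, hM⟩ := hK.exists_bound_of_continuousOn (h.contDiffOn.continuousOn.mono hKW)
  exact ⟨max M 0, le_max_right _ _, fun p hp => by
    rw [← h p]; exact (hM p hp).trans (le_max_left _ _)⟩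

end Analysis

end SteadySoliton

open SteadySoliton

/-! ### The estimate on compact sets -/

theorem stmt17 (n : ℕ) (U : Set (Fin n → ℝ)) (hU : IsOpen U)
    (a b : ℝ) (hab : a < b)
    (g : E n → Matrix (Fin n) (Fin n) ℝ)
    (hsmooth : ∀ i j, ContDiffOn ℝ (⊤ : ℕ∞) (fun p => g p i j) (U ×ˢ Set.Ioo a b))
    (hsymm : ∀ p ∈ U ×ˢ Set.Ioo a b, (g p).IsSymm)
    (hpos : ∀ p ∈ U ×ˢ Set.Ioo a b, (g p).PosDef)
    (hflow : ∀ p ∈ U ×ˢ Set.Ioo a b, ∀ j k : Fin n,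
      pdt (fun q => g q j k) p = 2 * Ric g j k p)
    (hRbd : ∃ C : ℝ, ∀ p ∈ U ×ˢ Set.Ioo a b, |scal g p| ≤ C) :
    ∀ K : Set (E n), K ⊆ U ×ˢ Set.Ioo a b → IsCompact K →
      ∃ N₀ : ℕ, ∃ C : ℝ, 0 < C ∧ ∀ N : ℕ, N₀ ≤ N →
        (∃ V : Set (E n), IsOpen V ∧ K ⊆ V ∧ V ⊆ U ×ˢ Set.Ioo a b ∧
          ∀ p ∈ V, 0 < (N : ℝ) + scal g p) ∧
        ∀ p ∈ K, ∀ i j : Fin n,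
          |barRic g N i.succ j.succ p + barHess g N (fun q => -(N : ℝ) * q.2) i.succ j.succ p| ≤ C / (N : ℝ) ∧
          |barRic g N i.succ 0 p + barHess g N (fun q => -(N : ℝ) * q.2) i.succ 0 p| ≤ C / (N : ℝ) ∧
          |barRic g N 0 0 p + barHess g N (fun q => -(N : ℝ) * q.2) 0 0 p| ≤ C / (N : ℝ) := by
  intro K hKW hK
  obtain ⟨C₀, hC₀⟩ := hRbd
  let W : TopologicalSpace.Opens (E n) := ⟨U ×ˢ Set.Ioo a b, hU.prod isOpen_Ioo⟩
  let G : Matrix (Fin n) (Fin n) (smoothFn W) := Matrix.of fun i j => ofFun _ (hsmooth i j)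
  have hG : ∀ i j, Rep (fun p => g p i j) (G i j) := fun i j => rep_ofFun _ (hsmooth i j)
  obtain ⟨H, hH, hGH⟩ := exists_inverse hG fun p hp => (hpos p hp).det_pos.ne'
  have hF := reverseRicciFlow hG hH hGH hsymm hflow
  choose M₁ hM₁ hM₁' using fun a b => exists_bound (W := W) hK hKW
    (coeff₁ (dX W) H (christoffel (dX W) G H) (dT W) a b)
  choose M₂ hM₂ hM₂' using fun a b => exists_bound (W := W) hK hKW
    (coeff₂ (dX W) H (christoffel (dX W) G H) (dT W) a b)
  set C : ℝ := ∑ a, ∑ b, (M₁ a b + M₂ a b) with hC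
  have hM0 : ∀ a b, 0 ≤ M₁ a b + M₂ a b := fun a b => add_nonneg (hM₁ a b) (hM₂ a b)
  have hMC : ∀ a b, M₁ a b + M₂ a b ≤ C := fun a b =>
    (Finset.single_le_sum (fun b _ => hM0 a b) (Finset.mem_univ b)).trans
      (Finset.single_le_sum (f := fun a => ∑ b, (M₁ a b + M₂ a b))
        (fun a _ => Finset.sum_nonneg fun b _ => hM0 a b) (Finset.mem_univ a))
  have hCnn : 0 ≤ C := (hM0 0 0).trans (hMC 0 0)
  -- this choice of `N₀` makes `N + R ≥ N / 2 + 1` for `N ≥ N₀`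
  refine ⟨⌈2 * |C₀| + 2⌉₊, 2 * C + 1, by linarith, fun N hN => ?_⟩
  have hN' : 2 * |C₀| + 2 ≤ (N : ℝ) := (Nat.le_ceil _).trans (by exact_mod_cast hN)
  have hC₀' := abs_nonneg C₀
  have hlow : ∀ p ∈ W, (N : ℝ) / 2 + 1 ≤ (N : ℝ) + scal g p := by
    intro p hp
    have h1 := (abs_le.mp ((hC₀ p hp).trans (le_abs_self C₀))).1
    linarith
  have hNpos : (0 : ℝ) < N := by linarith
  have hpos' : ∀ p ∈ W, 0 < (N : ℝ) + scal g p := fun p hp => by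
    have := hlow p hp
    linarith
  refine ⟨⟨W, W.isOpen, hKW, subset_rfl, hpos'⟩, ?_⟩
  obtain ⟨u, hu, -⟩ := ((Rep.const (N : ℝ)).add (rep_scal hG hH hF)).inv
    fun p hp => (hpos' p hp).ne'
  have main : ∀ p ∈ K, ∀ a b : Fin (n + 1), leading (dX W) H (christoffel (dX W) G H) (dT W) a b = 0 →
      |barRic g N a b p + barHess g N (fun q => -(N : ℝ) * q.2) a b p|
        ≤ (2 * C + 1) / (N : ℝ) := by
    intro p hp a b h0
    rw [bar_expansion hG hH hF N hu (fun p hp => (hpos' p hp).ne') h0 ⟨p, hKW hp⟩]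
    have hl := hlow p (hKW hp)
    have h1 := hM₁' a b ⟨p, hKW hp⟩ hp
    have h2 := hM₂' a b ⟨p, hKW hp⟩ hp
    have hw0 : 0 < ((N : ℝ) + scal g p)⁻¹ := inv_pos.mpr (hpos' p (hKW hp))
    have hw1 : ((N : ℝ) + scal g p)⁻¹ ≤ 1 := inv_le_one_of_one_le₀ (by linarith)
    have hw2 : ((N : ℝ) + scal g p)⁻¹ ≤ 2 / N := by
      rw [inv_le_comm₀ (hpos' p (hKW hp)) (by positivity), inv_div]
      linarith
    have hsq : (((N : ℝ) + scal g p)⁻¹) ^ 2 ≤ ((N : ℝ) + scal g p)⁻¹ := by nlinarith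
    calc _ ≤ ((N : ℝ) + scal g p)⁻¹ * M₁ a b + ((N : ℝ) + scal g p)⁻¹ * M₂ a b := by
          refine (abs_add_le _ _).trans (add_le_add ?_ ?_)
          · rw [abs_mul, abs_of_pos hw0]
            exact mul_le_mul_of_nonneg_left h1 hw0.le
          · rw [abs_mul, abs_of_nonneg (sq_nonneg _)]
            exact mul_le_mul hsq h2 (abs_nonneg _) hw0.le
      _ = ((N : ℝ) + scal g p)⁻¹ * (M₁ a b + M₂ a b) := by ring
      _ ≤ 2 / N * C := mul_le_mul hw2 (hMC a b) (hM0 a b) (by positivity)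
      _ ≤ (2 * C + 1) / N := by
          rw [div_mul_eq_mul_div]
          gcongr
          linarith
  intro p hp i j
  exact ⟨main p hp _ _ (hF.leading_space i j), main p hp _ _ (hF.leading_mixed i),
    main p hp _ _ hF.leading_time⟩
end
end

section
/- Length expansion for the canonical shrinking soliton (formula (4.1)): there exist N₀ > 0 and C > 0 such that for every real N ≥ N₀ the integrand I_N is strictly positive on [τ₁, τ₂] and | ∫_{τ₁}^{τ₂} √(I_N(τ)) dτ − √(2N) (τ₁^{−1/2} − τ₂^{−1/2}) − (2N)^{−1/2} ( L − n (√τ₂ − √τ₁) ) | ≤ C N^{−3/2}. -/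
/-!
The dominant term of the integrand is `N / (2 τ³) = P²` with `P = √(2N) / (2 (√τ)³)`, and the
remainder `E = A/τ + B/τ − n/(2τ²)` is bounded on `[τ₁, τ₂]` independently of `N`. The quadratic
Taylor estimate `|√(P² + E) − P − E / (2P)| ≤ E² / (2P³)` (`abs_sqrt_add_sub_le`) therefore
has an error of order `N^(-3/2)`, uniformly in `τ`. The two leading terms integrate exactly:
`∫ P` is computed with the primitive `-1/√τ` of `1/(2 (√τ)³)`, and
`E / (2P) = (√τ (A + B) − n / (2√τ)) / √(2N)` gives the `L`-length and `n (√τ₂ − √τ₁)`.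
-/

open scoped BigOperators

/-- Second-order Taylor bound for the square root: with `S = √(P² + E)` the error equals
`-E² / (2 P (S + P)²)`. -/
lemma abs_sqrt_add_sub_le {P E : ℝ} (hP : 0 < P) (hE : 0 ≤ P ^ 2 + E) :
    |Real.sqrt (P ^ 2 + E) - (P + E / (2 * P))| ≤ E ^ 2 / (2 * P ^ 3) := by
  obtain ⟨S, hS⟩ : ∃ S, S = Real.sqrt (P ^ 2 + E) := ⟨_, rfl⟩
  have hS0 : 0 ≤ S := hS ▸ Real.sqrt_nonneg _
  have hSq : S ^ 2 = P ^ 2 + E := by rw [hS, Real.sq_sqrt hE]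
  rw [← hS]
  obtain rfl : E = S ^ 2 - P ^ 2 := by linarith
  have h1 : S - (P + (S ^ 2 - P ^ 2) / (2 * P)) = -((S - P) ^ 2 / (2 * P)) := by
    field_simp
    ring
  rw [h1, abs_neg, abs_of_nonneg (by positivity), div_le_div_iff₀ (by positivity) (by positivity)]
  have h2 : P ^ 2 ≤ (S + P) ^ 2 := by gcongr; linarith
  have h3 : 0 ≤ (S - P) ^ 2 * (2 * P) := by positivity
  calc (S - P) ^ 2 * (2 * P ^ 3) = (S - P) ^ 2 * (2 * P) * P ^ 2 := by ring
    _ ≤ (S - P) ^ 2 * (2 * P) * (S + P) ^ 2 := by gcongr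
    _ = (S ^ 2 - P ^ 2) ^ 2 * (2 * P) := by ring

lemma hasDerivAt_neg_inv_sqrt {t : ℝ} (ht : 0 < t) :
    HasDerivAt (fun x => -(1 / Real.sqrt x)) (1 / (2 * Real.sqrt t ^ 3)) t := by
  have hs : Real.sqrt t ≠ 0 := (Real.sqrt_pos.2 ht).ne'
  have h := ((Real.hasDerivAt_sqrt ht.ne').inv hs).neg
  simp only [one_div] at h ⊢
  refine h.congr_deriv ?_
  field_simp

lemma integral_inv_sqrt_cube {a b : ℝ} (ha : 0 < a) (hab : a ≤ b) :
    ∫ t in a..b, 1 / (2 * Real.sqrt t ^ 3) = 1 / Real.sqrt a - 1 / Real.sqrt b := by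
  have hpos : ∀ t ∈ Set.uIcc a b, 0 < t := fun t ht => by
    rw [Set.uIcc_of_le hab] at ht
    exact ha.trans_le ht.1
  rw [intervalIntegral.integral_eq_sub_of_hasDerivAt
    (f := fun x => -(1 / Real.sqrt x)) (fun t ht => hasDerivAt_neg_inv_sqrt (hpos t ht))]
  · ring
  · refine ContinuousOn.intervalIntegrable ?_
    refine ContinuousOn.div continuousOn_const (by fun_prop) fun t ht => ?_
    have := Real.sqrt_pos.2 (hpos t ht)
    positivity

lemma integral_inv_two_sqrt {a b : ℝ} (ha : 0 < a) (hab : a ≤ b) :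
    ∫ t in a..b, 1 / (2 * Real.sqrt t) = Real.sqrt b - Real.sqrt a := by
  have hpos : ∀ t ∈ Set.uIcc a b, 0 < t := fun t ht => by
    rw [Set.uIcc_of_le hab] at ht
    exact ha.trans_le ht.1
  refine intervalIntegral.integral_eq_sub_of_hasDerivAt
    (fun t ht => Real.hasDerivAt_sqrt (hpos t ht).ne') ?_
  refine ContinuousOn.intervalIntegrable ?_
  refine ContinuousOn.div continuousOn_const (by fun_prop) fun t ht => ?_
  have := Real.sqrt_pos.2 (hpos t ht)
  positivity

lemma rpow_three_halves {N : ℝ} (hN : 0 ≤ N) : N ^ ((3 : ℝ) / 2) = Real.sqrt N ^ 3 := by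
  rw [Real.sqrt_eq_rpow, ← Real.rpow_natCast, ← Real.rpow_mul hN]
  norm_num

/-- Length expansion for the canonical shrinking soliton (formula (4.1)).

Here `A τ = |γ'(τ)|²_{g(τ)} ≥ 0` and `B τ = R(γ(τ), τ)` along a curve `γ` in a Ricci flow,
`I_N τ = A τ/τ + N/(2τ³) + B τ/τ − n/(2τ²)` is the squared speed of the space-time curve
`τ ↦ (γ(τ), τ)` for the canonical shrinking soliton metric `ĝ`, and
`L = ∫ √τ (B + A) dτ` is Perelman's `L`-length. -/
theorem stmt18 (n : ℕ) (τ₁ τ₂ : ℝ) (hτ₁ : 0 < τ₁) (h₁₂ : τ₁ < τ₂)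
    (A B : ℝ → ℝ)
    (hA : ContinuousOn A (Set.Icc τ₁ τ₂)) (hB : ContinuousOn B (Set.Icc τ₁ τ₂))
    (hA0 : ∀ τ ∈ Set.Icc τ₁ τ₂, 0 ≤ A τ) :
    ∃ N₀ C : ℝ, 0 < N₀ ∧ 0 < C ∧ ∀ N : ℝ, N₀ ≤ N →
      (∀ τ ∈ Set.Icc τ₁ τ₂,
        0 < A τ / τ + N / (2 * τ ^ 3) + B τ / τ - n / (2 * τ ^ 2)) ∧
      |(∫ τ in τ₁..τ₂,
            Real.sqrt (A τ / τ + N / (2 * τ ^ 3) + B τ / τ - n / (2 * τ ^ 2)))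
          - Real.sqrt (2 * N) * (1 / Real.sqrt τ₁ - 1 / Real.sqrt τ₂)
          - (1 / Real.sqrt (2 * N)) *
              ((∫ τ in τ₁..τ₂, Real.sqrt τ * (B τ + A τ))
                - n * (Real.sqrt τ₂ - Real.sqrt τ₁))|
        ≤ C / N ^ ((3 : ℝ) / 2) := by
  have hpos : ∀ τ ∈ Set.Icc τ₁ τ₂, 0 < τ := fun τ h => hτ₁.trans_le h.1
  obtain ⟨E, hEdef⟩ : ∃ E : ℝ → ℝ, E = fun τ => A τ / τ + B τ / τ - n / (2 * τ ^ 2) := ⟨_, rfl⟩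
  have hE : ContinuousOn E (Set.Icc τ₁ τ₂) := by
    rw [hEdef]
    refine ((hA.div continuousOn_id fun τ h => (hpos τ h).ne').add
      (hB.div continuousOn_id fun τ h => (hpos τ h).ne')).sub
      (continuousOn_const.div (by fun_prop) fun τ h => ?_)
    have := hpos τ h
    positivity
  obtain ⟨M, hM⟩ := isCompact_Icc.exists_bound_of_continuousOn hE
  have hM0 : 0 ≤ M := (norm_nonneg _).trans (hM τ₁ ⟨le_rfl, h₁₂.le⟩)
  have hτ₂ : 0 < τ₂ := hτ₁.trans h₁₂
  have hs₂ : 0 < Real.sqrt τ₂ := Real.sqrt_pos.2 hτ₂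
  have hd : 0 < τ₂ - τ₁ := sub_pos.2 h₁₂
  -- For `N ≥ N₀` the main term satisfies `P² = N / (2 τ³) ≥ M + 1 > |E|` on the whole interval.
  refine ⟨2 * τ₂ ^ 3 * (M + 1), 4 * (M ^ 2 + 1) * Real.sqrt τ₂ ^ 9 * (τ₂ - τ₁),
    by positivity, by positivity, fun N hN => ?_⟩
  have hNpos : 0 < N := lt_of_lt_of_le (by positivity) hN
  obtain ⟨r, hr⟩ : ∃ r, r = Real.sqrt (2 * N) := ⟨_, rfl⟩
  have hr0 : 0 < r := hr ▸ Real.sqrt_pos.2 (by positivity)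
  have hr2 : r ^ 2 = 2 * N := by rw [hr, Real.sq_sqrt (by positivity)]
  have hsplit : ∀ τ ∈ Set.Icc τ₁ τ₂,
      A τ / τ + N / (2 * τ ^ 3) + B τ / τ - n / (2 * τ ^ 2)
        = (r / (2 * Real.sqrt τ ^ 3)) ^ 2 + E τ := by
    intro τ h
    have h6 : (Real.sqrt τ ^ 3) ^ 2 = τ ^ 3 := by
      rw [← pow_mul, mul_comm, pow_mul, Real.sq_sqrt (hpos τ h).le]
    have hN2 : N = r ^ 2 / 2 := by linarith
    rw [hEdef, div_pow, mul_pow, h6, hN2]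
    ring
  have hbig : ∀ τ ∈ Set.Icc τ₁ τ₂, 0 < A τ / τ + N / (2 * τ ^ 3) + B τ / τ - n / (2 * τ ^ 2) := by
    intro τ h
    have hτ := hpos τ h
    have h1 : M + 1 ≤ N / (2 * τ ^ 3) := by
      rw [le_div_iff₀ (by positivity)]
      have h3 : τ ^ 3 ≤ τ₂ ^ 3 := by gcongr; exact h.2
      nlinarith
    have h2 : -M ≤ E τ := (abs_le.1 (hM τ h)).1
    rw [hEdef] at h2
    dsimp only at h2
    linarith
  refine ⟨hbig, ?_⟩
  rw [← hr]
  obtain ⟨G, hG⟩ : ∃ G : ℝ → ℝ, G = fun τ => r * (1 / (2 * Real.sqrt τ ^ 3))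
      + 1 / r * (Real.sqrt τ * (B τ + A τ) - n * (1 / (2 * Real.sqrt τ))) := ⟨_, rfl⟩
  have hsp : ∀ τ ∈ Set.uIcc τ₁ τ₂, 0 < Real.sqrt τ := fun τ h => by
    rw [Set.uIcc_of_le h₁₂.le] at h
    exact Real.sqrt_pos.2 (hpos τ h)
  have i1 : IntervalIntegrable (fun τ => 1 / (2 * Real.sqrt τ ^ 3)) MeasureTheory.volume τ₁ τ₂ :=
    (ContinuousOn.div continuousOn_const (by fun_prop) fun τ h => by
      have := hsp τ h
      positivity).intervalIntegrable
  have i2 : IntervalIntegrable (fun τ => 1 / (2 * Real.sqrt τ)) MeasureTheory.volume τ₁ τ₂ :=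
    (ContinuousOn.div continuousOn_const (by fun_prop) fun τ h => by
      have := hsp τ h
      positivity).intervalIntegrable
  have i3 : IntervalIntegrable (fun τ => Real.sqrt τ * (B τ + A τ))
      MeasureTheory.volume τ₁ τ₂ := by
    refine ContinuousOn.intervalIntegrable ?_
    rw [Set.uIcc_of_le h₁₂.le]
    exact Real.continuous_sqrt.continuousOn.mul (hB.add hA)
  have i4 : IntervalIntegrable (fun τ =>
      Real.sqrt (A τ / τ + N / (2 * τ ^ 3) + B τ / τ - n / (2 * τ ^ 2)))
      MeasureTheory.volume τ₁ τ₂ := by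
    refine ContinuousOn.intervalIntegrable ?_
    rw [Set.uIcc_of_le h₁₂.le]
    refine Real.continuous_sqrt.comp_continuousOn (ContinuousOn.congr ?_ hsplit)
    refine ContinuousOn.add (ContinuousOn.pow (continuousOn_const.div (by fun_prop) fun τ h => ?_) 2)
      hE
    have := Real.sqrt_pos.2 (hpos τ h)
    positivity
  have iG : IntervalIntegrable G MeasureTheory.volume τ₁ τ₂ := by
    rw [hG]
    exact (i1.const_mul r).add ((i3.sub (i2.const_mul _)).const_mul _)
  have hGint : ∫ τ in τ₁..τ₂, G τ = r * (1 / Real.sqrt τ₁ - 1 / Real.sqrt τ₂)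
      + 1 / r * ((∫ τ in τ₁..τ₂, Real.sqrt τ * (B τ + A τ))
        - n * (Real.sqrt τ₂ - Real.sqrt τ₁)) := by
    rw [hG, intervalIntegral.integral_add (i1.const_mul r)
      ((i3.sub (i2.const_mul _)).const_mul _), intervalIntegral.integral_const_mul,
      intervalIntegral.integral_const_mul, intervalIntegral.integral_sub i3 (i2.const_mul _),
      intervalIntegral.integral_const_mul, integral_inv_sqrt_cube hτ₁ h₁₂.le,
      integral_inv_two_sqrt hτ₁ h₁₂.le]
  rw [sub_sub, ← hGint, ← intervalIntegral.integral_sub i4 iG]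
  have hpt : ∀ τ ∈ Set.uIoc τ₁ τ₂,
      ‖Real.sqrt (A τ / τ + N / (2 * τ ^ 3) + B τ / τ - n / (2 * τ ^ 2)) - G τ‖
        ≤ 4 * (M ^ 2 + 1) * Real.sqrt τ₂ ^ 9 / N ^ ((3 : ℝ) / 2) := by
    intro τ h
    rw [Set.uIoc_of_le h₁₂.le] at h
    have hmem : τ ∈ Set.Icc τ₁ τ₂ := ⟨h.1.le, h.2⟩
    have hτ := hpos τ hmem
    obtain ⟨s, hs⟩ : ∃ s, s = Real.sqrt τ := ⟨_, rfl⟩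
    have hs0 : 0 < s := hs ▸ Real.sqrt_pos.2 hτ
    have hss : τ = s ^ 2 := by rw [hs, Real.sq_sqrt hτ.le]
    have hGeq : G τ = r / (2 * s ^ 3) + E τ / (2 * (r / (2 * s ^ 3))) := by
      rw [hG, hEdef]
      dsimp only
      rw [← hs]
      generalize A τ = a
      generalize B τ = b
      rw [hss]
      field_simp
      ring
    have hpos' := hbig τ hmem
    rw [hsplit τ hmem, ← hs] at hpos' ⊢
    rw [hGeq, Real.norm_eq_abs]
    refine (abs_sqrt_add_sub_le (by positivity) hpos'.le).trans ?_
    have hNr : N ^ ((3 : ℝ) / 2) ≤ r ^ 3 := by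
      rw [rpow_three_halves hNpos.le, hr]
      gcongr
      linarith
    have hE2 : E τ ^ 2 ≤ M ^ 2 + 1 := by
      have := sq_le_sq' (abs_le.1 (hM τ hmem)).1 (abs_le.1 (hM τ hmem)).2
      linarith
    have hs9 : s ^ 9 ≤ Real.sqrt τ₂ ^ 9 := by
      rw [hs]
      gcongr
      exact h.2
    have hNp : 0 < N ^ ((3 : ℝ) / 2) := by positivity
    calc E τ ^ 2 / (2 * (r / (2 * s ^ 3)) ^ 3) = 4 * E τ ^ 2 * s ^ 9 / r ^ 3 := by
          field_simp
          ring
      _ ≤ 4 * (M ^ 2 + 1) * Real.sqrt τ₂ ^ 9 / N ^ ((3 : ℝ) / 2) := by gcongr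
  have hfin := intervalIntegral.norm_integral_le_of_norm_le_const hpt
  rw [Real.norm_eq_abs, abs_of_pos hd] at hfin
  refine hfin.trans (le_of_eq ?_)
  ring
end
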